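/- arXiv:1401.0134 — 2 statements merged into one kernel-verified Lean document; each statement's English description precedes it below -/
import Mathlib

section
/- Let A be an n×n copositive matrix and I ⊆ {1,…,n} an index set such that the principal submatrix A_I is positive definite. Let u^1,…,u^m be zeros of A such that for each l, Supp(u^l) \ I = {k^l} consists of exactly one element, normalized so that u^l_{k^l} = 1, with u^1,…,u^m mutually distinct after normalization, and suppose Supp(u^r_I) ⊆ Supp(u^{r+1}_I) for r = 1,…,m−1. Then: the indices k^1,…,k^m are mutually distinct; each u^l is a minimal zero of A; every zero v of A with Supp(v) ⊆ I ∪ {k^1,…,k^m} equals ∑_{i=1}^m α_i u^i for some nonnegative scalars α_i; and if in addition v is a minimal zero, then v = α u^l for some l ∈ {1,…,m} and some α > 0. -/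
/-!
Let `u` be a zero of a copositive `A`. First-order optimality gives `A u ≥ 0` entrywise
(`IsZeroOf.mulVec_nonneg`), and then `uᵀ A u = 0` forces `(A u)ᵢ = 0` on the support of `u`
(`IsZeroOf.mulVec_eq_zero`). Positive definiteness of `A_I` says that a vector `w` vanishing off `I`
with `wᵀ A w ≤ 0` is zero (`eq_zero_of_posDef`). Every assertion is obtained by applying this to a
difference of vectors.

* If `v` is a zero with `Supp v ⊆ Supp (u l)`, then `w = v - v_{k l} u l` vanishes off `I` and
  `wᵀ A w = 0`, so `v` is a multiple of `u l`. This gives the injectivity of `k`, minimality of each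
  `u l`, and, given the decomposition, the statement on minimal zeros.
* If `v` is a zero supported in `I ∪ {k l}`, put `α l = v_{k l}` and `w = v - ∑ α l u l`, which
  vanishes off `I`. Writing `C i j = (A u j)_{k i} ≥ 0`, the chain condition gives
  `u iᵀ A u j ≤ C i j + C j i`, while `vᵀ A u j ≥ ∑ i, α i C i j`. Hence
  `wᵀ A w = -2 ∑ α j vᵀ A u j + ∑ α i α j u iᵀ A u j ≤ 0`, and `w = 0`.
-/

open Matrix

/-- A symmetric matrix `A` is copositive if `xᵀ A x ≥ 0` for all entrywise nonnegative `x`. -/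
def Copositive {n : ℕ} (A : Matrix (Fin n) (Fin n) ℝ) : Prop :=
  A.IsSymm ∧ ∀ x : Fin n → ℝ, (∀ i, 0 ≤ x i) → 0 ≤ x ⬝ᵥ A.mulVec x

/-- The support of a vector. -/
def Supp {ι : Type*} (u : ι → ℝ) : Set ι := {i | u i ≠ 0}

/-- A zero of a copositive matrix: a nonzero nonnegative vector `u` with `uᵀ A u = 0`. -/
def IsZeroOf {n : ℕ} (A : Matrix (Fin n) (Fin n) ℝ) (u : Fin n → ℝ) : Prop :=
  u ≠ 0 ∧ (∀ i, 0 ≤ u i) ∧ u ⬝ᵥ A.mulVec u = 0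

/-- A minimal zero: a zero such that no zero has support strictly contained in its support. -/
def IsMinimalZeroOf {n : ℕ} (A : Matrix (Fin n) (Fin n) ℝ) (u : Fin n → ℝ) : Prop :=
  IsZeroOf A u ∧ ¬ ∃ v, IsZeroOf A v ∧ Supp v ⊂ Supp u

/-- The principal submatrix of `A` with rows and columns in `I`. -/
def subMat {n : ℕ} (A : Matrix (Fin n) (Fin n) ℝ) (I : Finset (Fin n)) :
    Matrix {i // i ∈ I} {i // i ∈ I} ℝ :=
  A.submatrix Subtype.val Subtype.val

/-- The subvector of `u` with indices in `I`. -/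
def subVec {n : ℕ} (u : Fin n → ℝ) (I : Finset (Fin n)) : {i // i ∈ I} → ℝ :=
  fun i => u i.val

/-- Irreducibility of a copositive matrix `A` with respect to a set `M` of matrices. -/
def IrreducibleWrtSet {n : ℕ} (A : Matrix (Fin n) (Fin n) ℝ)
    (M : Set (Matrix (Fin n) (Fin n) ℝ)) : Prop :=
  ¬ ∃ γ : ℝ, 0 < γ ∧ ∃ B ∈ M, B ≠ 0 ∧ Copositive (A - γ • B)

/-- Irreducibility of a copositive matrix `A` with respect to a single matrix `M`. -/
def IrreducibleWrtMat {n : ℕ} (A M : Matrix (Fin n) (Fin n) ℝ) : Prop :=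
  ¬ ∃ γ : ℝ, 0 < γ ∧ Copositive (A - γ • M)

/-- An extremal element of a cone `K` of vectors. -/
def IsExtremalIn {ι : Type*} (K : Set (ι → ℝ)) (u : ι → ℝ) : Prop :=
  u ∈ K ∧ u ≠ 0 ∧ ∀ v w, v ∈ K → w ∈ K → u = v + w →
    (∃ a : ℝ, 0 ≤ a ∧ v = a • u) ∧ (∃ b : ℝ, 0 ≤ b ∧ w = b • u)

/-- The matrix with entries 1 at positions `(i,j)` and `(j,i)` and 0 elsewhere. -/
def Eij {n : ℕ} (i j : Fin n) : Matrix (Fin n) (Fin n) ℝ :=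
  fun a b => if (a = i ∧ b = j) ∨ (a = j ∧ b = i) then 1 else 0

section CopositiveZeros

variable {n : ℕ} {A : Matrix (Fin n) (Fin n) ℝ}

lemma dotProduct_mulVec_comm_of_isSymm (hA : A.IsSymm) (x y : Fin n → ℝ) :
    x ⬝ᵥ A.mulVec y = y ⬝ᵥ A.mulVec x := by
  rw [dotProduct_mulVec, ← mulVec_transpose, hA.eq, dotProduct_comm]

lemma sub_smul_quadratic (hA : A.IsSymm) (x y : Fin n → ℝ) (c : ℝ) :
    (x - c • y) ⬝ᵥ A.mulVec (x - c • y)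
      = x ⬝ᵥ A.mulVec x - 2 * c * (x ⬝ᵥ A.mulVec y) + c ^ 2 * (y ⬝ᵥ A.mulVec y) := by
  simp only [mulVec_sub, mulVec_smul, sub_dotProduct, dotProduct_sub, smul_dotProduct,
    dotProduct_smul, smul_eq_mul]
  rw [dotProduct_mulVec_comm_of_isSymm hA y x]
  ring

lemma IsZeroOf.mulVec_nonneg {u : Fin n → ℝ} (hu : IsZeroOf A u) (hA : Copositive A)
    (i : Fin n) : 0 ≤ A.mulVec u i := by
  by_contra! hneg
  -- Moving from `u` a distance `t` along `eᵢ` gives the value `2 t (A u)ᵢ + t² Aᵢᵢ`.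
  have key : ∀ t : ℝ, 0 < t → 0 ≤ 2 * t * A.mulVec u i + t ^ 2 * A i i := by
    intro t ht
    have h := hA.2 (u - (-t) • Pi.single i 1) (fun j => by
      have h1 := hu.2.1 j
      by_cases hj : j = i
      · subst hj; simp; linarith
      · simp [hj, h1])
    rw [sub_smul_quadratic hA.1, hu.2.2, dotProduct_mulVec_comm_of_isSymm hA.1] at h
    simp at h
    linarith
  set a := A.mulVec u i
  have hd : 0 < |A i i| + 1 := by positivity
  have h := key (-a / (|A i i| + 1)) (div_pos (by linarith) hd)
  have h1 : -a / (|A i i| + 1) * A i i ≤ -a := by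
    rw [div_mul_eq_mul_div, div_le_iff₀ hd]
    nlinarith [le_abs_self (A i i)]
  have ht : 0 < -a / (|A i i| + 1) := div_pos (by linarith) hd
  nlinarith

lemma IsZeroOf.mulVec_eq_zero {u : Fin n → ℝ} (hu : IsZeroOf A u) (hA : Copositive A)
    {i : Fin n} (hi : u i ≠ 0) : A.mulVec u i = 0 := by
  have h := hu.2.2
  rw [dotProduct, Finset.sum_eq_zero_iff_of_nonneg
    (fun j _ => mul_nonneg (hu.2.1 j) (hu.mulVec_nonneg hA j))] at h
  exact (mul_eq_zero.1 (h i (Finset.mem_univ i))).resolve_left hi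

lemma IsZeroOf.dotProduct_mulVec_eq_zero {u v : Fin n → ℝ} (hu : IsZeroOf A u)
    (hA : Copositive A) (hv : Supp v ⊆ Supp u) : v ⬝ᵥ A.mulVec u = 0 := by
  refine Finset.sum_eq_zero fun i _ => ?_
  by_cases hi : v i = 0
  · simp [hi]
  · rw [hu.mulVec_eq_zero hA (hv hi), mul_zero]

lemma eq_zero_of_posDef {I : Finset (Fin n)} (hI : (subMat A I).PosDef) {w : Fin n → ℝ}
    (hw : ∀ i ∉ I, w i = 0) (hq : w ⬝ᵥ A.mulVec w ≤ 0) : w = 0 := by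
  have sum_eq : ∀ f : Fin n → ℝ, (∀ i ∉ I, f i = 0) → ∑ i : {i // i ∈ I}, f i = ∑ i, f i := by
    intro f hf
    rw [Finset.sum_coe_sort I f]
    exact Finset.sum_subset (Finset.subset_univ I) fun i _ hi => hf i hi
  have hval : subVec w I ⬝ᵥ (subMat A I).mulVec (subVec w I) = w ⬝ᵥ A.mulVec w := by
    have h1 : ∀ i : {i // i ∈ I}, (subMat A I).mulVec (subVec w I) i = A.mulVec w i := fun i =>
      sum_eq (fun j => A i j * w j) fun j hj => by simp [hw j hj]
    simp only [dotProduct, h1]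
    exact sum_eq (fun i => w i * A.mulVec w i) fun i hi => by simp [hw i hi]
  have hsub : subVec w I = 0 := by
    by_contra hne
    have h := hI.dotProduct_mulVec_pos hne
    simp only [star_trivial] at h
    linarith
  ext i
  by_cases hi : i ∈ I
  · exact congrFun hsub ⟨i, hi⟩
  · exact hw i hi

/-- A zero whose support exceeds `I` by a single index determines, up to scaling, all zeros
supported within its support. -/
lemma IsZeroOf.eq_smul_of_supp_subset {I : Finset (Fin n)} {u v : Fin n → ℝ} {k : Fin n}
    (hu : IsZeroOf A u) (hA : Copositive A) (hI : (subMat A I).PosDef)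
    (hsupp : Supp u \ (I : Set (Fin n)) = {k}) (hk : u k = 1)
    (hv : IsZeroOf A v) (hvu : Supp v ⊆ Supp u) : v = v k • u := by
  refine sub_eq_zero.1 (eq_zero_of_posDef hI (fun i hi => ?_) ?_)
  · by_cases hik : i = k
    · subst hik; simp [hk]
    · have hui : u i = 0 := by
        by_contra h
        exact hik (hsupp.subset ⟨h, hi⟩)
      have hvi : v i = 0 := by
        by_contra h
        exact hvu h hui
      simp [hui, hvi]
  · rw [sub_smul_quadratic hA.1, hu.2.2, hv.2.2, hu.dotProduct_mulVec_eq_zero hA hvu]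
    simp

end CopositiveZeros

theorem stmt11 {n m : ℕ} (A : Matrix (Fin n) (Fin n) ℝ) (hA : Copositive A)
    (I : Finset (Fin n)) (hI : (subMat A I).PosDef)
    (u : Fin m → Fin n → ℝ) (k : Fin m → Fin n)
    (hz : ∀ l, IsZeroOf A (u l))
    (hsupp : ∀ l, Supp (u l) \ (I : Set (Fin n)) = {k l})
    (hnorm : ∀ l, u l (k l) = 1)
    (hdist : Function.Injective u)
    (hchain : ∀ (r : ℕ) (h : r + 1 < m),
      (Supp (u ⟨r, Nat.lt_of_succ_lt h⟩) ∩ (I : Set (Fin n))) ⊆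
        (Supp (u ⟨r + 1, h⟩) ∩ (I : Set (Fin n)))) :
    Function.Injective k ∧
    (∀ l, IsMinimalZeroOf A (u l)) ∧
    (∀ v, IsZeroOf A v → Supp v ⊆ (I : Set (Fin n)) ∪ Set.range k →
      ∃ α : Fin m → ℝ, (∀ i, 0 ≤ α i) ∧ v = ∑ i, α i • u i) ∧
    (∀ v, IsMinimalZeroOf A v → Supp v ⊆ (I : Set (Fin n)) ∪ Set.range k →
      ∃ (l : Fin m) (a : ℝ), 0 < a ∧ v = a • u l) := by
  have hchain' : ∀ i j : Fin m, i ≤ j →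
      Supp (u i) ∩ (I : Set (Fin n)) ⊆ Supp (u j) ∩ (I : Set (Fin n)) := by
    rintro ⟨i, hi⟩ ⟨j, hj⟩ hij
    replace hij : i ≤ j := hij
    induction j, hij using Nat.le_induction with
    | base => exact subset_rfl
    | succ j hij ih => exact (ih (Nat.lt_of_succ_lt hj)).trans (hchain j hj)
  have hkI : ∀ l, k l ∉ I := fun l => by
    have h : k l ∈ Supp (u l) \ (I : Set (Fin n)) := by rw [hsupp l]; rfl
    exact h.2
  have hoff : ∀ l i, i ∉ I → i ≠ k l → u l i = 0 := fun l i hi hik => by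
    by_contra h
    exact hik ((hsupp l).subset ⟨h, hi⟩)
  have hscale : ∀ l v, IsZeroOf A v → Supp v ⊆ Supp (u l) → v = v (k l) • u l := fun l v hv h =>
    (hz l).eq_smul_of_supp_subset hA hI (hsupp l) (hnorm l) hv h
  have hkinj : Function.Injective k := by
    have aux : ∀ i j, i ≤ j → k i = k j → i = j := by
      intro i j hij hk
      have hsub : Supp (u i) ⊆ Supp (u j) := by
        intro x hx
        by_cases hxI : x ∈ I
        · exact (hchain' i j hij ⟨hx, hxI⟩).1
        · have hxk : x = k i := (hsupp i).subset ⟨hx, hxI⟩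
          have : u j x = 1 := by rw [hxk, hk, hnorm]
          simp [Supp, this]
      have h := hscale j (u i) (hz i) hsub
      rw [← hk, hnorm, one_smul] at h
      exact hdist h
    intro i j hk
    rcases le_total i j with h | h
    · exact aux i j h hk
    · exact (aux j i h hk.symm).symm
  have hdecomp : ∀ v, IsZeroOf A v → Supp v ⊆ (I : Set (Fin n)) ∪ Set.range k →
      ∃ α : Fin m → ℝ, (∀ i, 0 ≤ α i) ∧ v = ∑ i, α i • u i := by
    intro v hv hvs
    have hα : ∀ i, 0 ≤ v (k i) := fun i => hv.2.1 _
    have hC : ∀ i j, 0 ≤ A.mulVec (u j) (k i) := fun i j => (hz j).mulVec_nonneg hA _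
    -- For `i ≤ j` the `I`-part of `u i` is orthogonal to `A u j`, so only `k i` contributes.
    have hB1 : ∀ i j, i ≤ j → u i ⬝ᵥ A.mulVec (u j) = A.mulVec (u j) (k i) := by
      intro i j hij
      rw [dotProduct, Finset.sum_eq_single (k i), hnorm, one_mul]
      · intro x _ hx
        by_cases hxi : u i x = 0
        · simp [hxi]
        · by_cases hxI : x ∈ I
          · rw [(hz j).mulVec_eq_zero hA (hchain' i j hij ⟨hxi, hxI⟩).1, mul_zero]
          · exact absurd (hoff i x hxI hx) hxi
      · simp
    have hB : ∀ i j, u i ⬝ᵥ A.mulVec (u j) ≤ A.mulVec (u j) (k i) + A.mulVec (u i) (k j) := by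
      intro i j
      rcases le_total i j with h | h
      · rw [hB1 i j h]; linarith [hC j i]
      · rw [dotProduct_mulVec_comm_of_isSymm hA.1, hB1 j i h]; linarith [hC i j]
    have hvu : ∀ j, ∑ i, v (k i) * A.mulVec (u j) (k i) ≤ v ⬝ᵥ A.mulVec (u j) := by
      intro j
      rw [← Finset.sum_image (f := fun x => v x * A.mulVec (u j) x) (s := Finset.univ) (g := k)
        hkinj.injOn]
      exact Finset.sum_le_sum_of_subset_of_nonneg (Finset.subset_univ _)
        fun x _ _ => mul_nonneg (hv.2.1 x) ((hz j).mulVec_nonneg hA x)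
    refine ⟨fun i => v (k i), hα, sub_eq_zero.1 (eq_zero_of_posDef hI (fun x hx => ?_) ?_)⟩
    · simp only [Pi.sub_apply, Finset.sum_apply, Pi.smul_apply, smul_eq_mul]
      by_cases hxr : x ∈ Set.range k
      · obtain ⟨l, rfl⟩ := hxr
        rw [Finset.sum_eq_single l, hnorm, mul_one, sub_self]
        · intro i _ hi
          rw [hoff i _ hx (fun h => hi (hkinj h).symm), mul_zero]
        · simp
      · have hvx : v x = 0 := by
          by_contra h
          exact (hvs h).elim hx hxr
        rw [hvx, Finset.sum_eq_zero, sub_zero]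
        intro i _
        rw [hoff i x hx (fun h => hxr ⟨i, h.symm⟩), mul_zero]
    · set s := ∑ i, v (k i) • u i with hs
      have h1 : v ⬝ᵥ A.mulVec s = ∑ j, v (k j) * (v ⬝ᵥ A.mulVec (u j)) := by
        simp [hs, mulVec_sum, mulVec_smul, dotProduct_sum, dotProduct_smul]
      have h2 : s ⬝ᵥ A.mulVec s
          = ∑ j, ∑ i, v (k j) * (v (k i) * (u i ⬝ᵥ A.mulVec (u j))) := by
        simp [hs, mulVec_sum, mulVec_smul, dotProduct_sum, dotProduct_smul, sum_dotProduct,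
          smul_dotProduct, Finset.mul_sum]
      have h3 : ∑ j, ∑ i, v (k j) * (v (k i) * A.mulVec (u j) (k i)) ≤ v ⬝ᵥ A.mulVec s := by
        rw [h1]
        refine Finset.sum_le_sum fun j _ => ?_
        rw [← Finset.mul_sum]
        exact mul_le_mul_of_nonneg_left (hvu j) (hα j)
      have h4 : s ⬝ᵥ A.mulVec s
          ≤ 2 * ∑ j, ∑ i, v (k j) * (v (k i) * A.mulVec (u j) (k i)) := by
        have hswap : ∑ j, ∑ i, v (k j) * (v (k i) * A.mulVec (u i) (k j))
            = ∑ j, ∑ i, v (k j) * (v (k i) * A.mulVec (u j) (k i)) := by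
          rw [Finset.sum_comm]
          exact Finset.sum_congr rfl fun i _ => Finset.sum_congr rfl fun j _ => by ring
        rw [two_mul]
        nth_rw 2 [← hswap]
        rw [h2, ← Finset.sum_add_distrib]
        refine Finset.sum_le_sum fun j _ => ?_
        rw [← Finset.sum_add_distrib]
        refine Finset.sum_le_sum fun i _ => ?_
        rw [← mul_add, ← mul_add]
        exact mul_le_mul_of_nonneg_left (mul_le_mul_of_nonneg_left (hB i j) (hα i)) (hα j)
      have h5 := sub_smul_quadratic hA.1 v s 1
      rw [one_smul, hv.2.2] at h5
      linarith
  refine ⟨hkinj, fun l => ⟨hz l, ?_⟩, hdecomp, ?_⟩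
  · rintro ⟨v, hv, hvl⟩
    have h := hscale l v hv hvl.subset
    have hne : v (k l) ≠ 0 := fun h0 => hv.1 (by rw [h, h0, zero_smul])
    refine hvl.2 fun x hx => ?_
    change v x ≠ 0
    rw [h]
    exact mul_ne_zero hne hx
  · intro v hv hvs
    obtain ⟨α, hα, hsum⟩ := hdecomp v hv.1 hvs
    have hex : ∃ l, α l ≠ 0 := by
      by_contra! h
      exact hv.1.1 (by simp [hsum, h])
    obtain ⟨l, hl⟩ := hex
    have hsub : Supp (u l) ⊆ Supp v := by
      intro x hx
      have hpos : 0 < α l * u l x :=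
        mul_pos (lt_of_le_of_ne (hα l) hl.symm) (lt_of_le_of_ne ((hz l).2.1 x) (Ne.symm hx))
      have hle : α l * u l x ≤ ∑ i, α i * u i x :=
        Finset.single_le_sum (f := fun i => α i * u i x)
          (fun i _ => mul_nonneg (hα i) ((hz i).2.1 x)) (Finset.mem_univ l)
      have hvx : v x = ∑ i, α i * u i x := by simp [hsum, Finset.sum_apply]
      change v x ≠ 0
      rw [hvx]
      exact (hpos.trans_le hle).ne'
    have hsub' : Supp v ⊆ Supp (u l) := by
      by_contra h
      exact hv.2 ⟨u l, hz l, hsub, h⟩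
    have h := hscale l v hv.1 hsub'
    refine ⟨l, v (k l), lt_of_le_of_ne (hv.1.2.1 _) fun h0 => hv.1.1 ?_, h⟩
    rw [h, ← h0, zero_smul]
end

section
/- Let A be a 5×5 copositive matrix with A_{ii} = 1 for i = 1,…,5, and suppose A is irreducible with respect to E_{ij} for all pairs i, j ∈ {1,…,5} with i ≠ j. Suppose α_{ij} ∈ [0,1] are scalars such that A_{ij} = −cos(α_{ij}π) for all i, j. Then ∑_{1 ≤ i < j ≤ 5} α_{ij} ≥ 4. -/
open Matrix

/-!
Write `A i j = -cos (θ i j)` with `θ = α π`. The claim is that the ten angles sum to at least `4 π`.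

If `A` is positive semidefinite, it is the Gram matrix of five unit vectors of `ℝ⁵` whose pairwise
angles are `π - θ i j`. The fraction of hyperplanes through the origin separating two vectors is
their angle divided by `π` (`sepVol_eq`), and every hyperplane separates at most six of the ten
pairs, so the angles `π - θ i j` sum to at most `6 π` (`posSemidef_case`).

If `A i j = -1`, then `e_i + e_j` is a zero of `A`, and the bound is elementary (`neg_one_case`).

Otherwise, irreducibility with respect to `E_{ij}` provides a zero `u` whose support meets `{i, j}`
and for which `A u` vanishes at `i` and `j` (`exists_zero_of_irreducible`). As `A` is not positive
semidefinite, such a `u` is supported on a triple containing `i` and `j`, exactly where `A u`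
vanishes (`exists_zeroSupp`), and no three of these triples share a pair (`no_book`). Triples of
five points that cover each pair once or twice contain the five triples of consecutive vertices of
a pentagon (`exists_pentagon`). On each of the five triples the angles sum to `π`. Adding these five
sums counts every edge of the pentagon twice and every diagonal once, so the ten angles sum to `5 π`
minus the total angle of the edges, and the nonnegativity of `A u` for the five zeros implies that
the latter is at most `π` (`pentagon_case`).
-/

/-! ### Zeros of copositive matrices -/

/-- The bilinear form `xᵀ A y` of a matrix `A`. -/
def bil {n : ℕ} (A : Matrix (Fin n) (Fin n) ℝ) (x y : Fin n → ℝ) : ℝ := x ⬝ᵥ A *ᵥ y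

lemma bil_comm {n : ℕ} {A : Matrix (Fin n) (Fin n) ℝ} (hA : A.IsSymm) (x y : Fin n → ℝ) :
    bil A x y = bil A y x := by
  unfold bil
  rw [dotProduct_mulVec, ← mulVec_transpose, hA.eq, dotProduct_comm]

lemma bil_eq_sum {n : ℕ} (A : Matrix (Fin n) (Fin n) ℝ) (x y : Fin n → ℝ) :
    bil A x y = ∑ k, x k * (A *ᵥ y) k := rfl

lemma bil_add_smul {n : ℕ} {A : Matrix (Fin n) (Fin n) ℝ} (hA : A.IsSymm) (x y : Fin n → ℝ)
    (t : ℝ) : bil A (x + t • y) (x + t • y) = bil A x x + 2 * t * bil A x y + t ^ 2 * bil A y y := by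
  have h := bil_comm hA x y
  unfold bil at *
  simp only [mulVec_add, mulVec_smul, dotProduct_add, add_dotProduct, smul_dotProduct,
    dotProduct_smul, smul_eq_mul, ← h]
  ring

lemma bil_single_right {n : ℕ} {A : Matrix (Fin n) (Fin n) ℝ} (hA : A.IsSymm) (x : Fin n → ℝ)
    (k : Fin n) : bil A x (Pi.single k 1) = (A *ᵥ x) k := by
  rw [bil_comm hA, bil_eq_sum]
  simp [Pi.single_apply]

lemma bil_single_single {n : ℕ} (A : Matrix (Fin n) (Fin n) ℝ) (k : Fin n) :
    bil A (Pi.single k 1) (Pi.single k 1) = A k k := by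
  simp [bil]

lemma bil_zero_eq {n : ℕ} {A : Matrix (Fin n) (Fin n) ℝ} {u : Fin n → ℝ} (hu : IsZeroOf A u) :
    bil A u u = 0 := hu.2.2

/-- First-order optimality: a zero `u` minimises the form of `A` over the nonnegative orthant, so
`A u` is entrywise nonnegative. -/
lemma zero_mulVec_nonneg {n : ℕ} {A : Matrix (Fin n) (Fin n) ℝ} (hA : Copositive A)
    {u : Fin n → ℝ} (hu : IsZeroOf A u) (k : Fin n) : 0 ≤ (A *ᵥ u) k := by
  by_contra! hneg
  have key : ∀ t : ℝ, 0 ≤ t → 0 ≤ 2 * t * (A *ᵥ u) k + t ^ 2 * A k k := by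
    intro t ht
    have h := hA.2 (u + t • Pi.single k 1) (fun i => by
      have := hu.2.1 i
      by_cases h : i = k <;> simp [h] <;> first | (subst h; linarith) | linarith)
    change 0 ≤ bil A _ _ at h
    rw [bil_add_smul hA.1, bil_zero_eq hu, bil_single_right hA.1, bil_single_single] at h
    linarith
  have h1 := key 1 zero_le_one
  have hp : 0 < A k k := by linarith
  -- the minimum of the quadratic in `t` is negative
  have h2 := key (-(A *ᵥ u) k / A k k) (by apply div_nonneg <;> linarith)
  have : 2 * (-(A *ᵥ u) k / A k k) * (A *ᵥ u) k + (-(A *ᵥ u) k / A k k) ^ 2 * A k k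
      = -((A *ᵥ u) k ^ 2 / A k k) := by field_simp; ring
  rw [this] at h2
  have : 0 < (A *ᵥ u) k ^ 2 / A k k := by
    apply div_pos _ hp
    nlinarith
  linarith

/-- A nonnegative vector orthogonal to the zero `u` for the form of `A` is supported where `A u`
vanishes, since `A u` is nonnegative. -/
lemma bil_dead {n : ℕ} {A : Matrix (Fin n) (Fin n) ℝ} (hA : Copositive A)
    {u v : Fin n → ℝ} (hu : IsZeroOf A u) (hv : ∀ i, 0 ≤ v i) (h : bil A v u ≤ 0)
    (k : Fin n) (hk : v k ≠ 0) : (A *ᵥ u) k = 0 := by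
  rw [bil_eq_sum] at h
  have hn : ∀ i ∈ Finset.univ, 0 ≤ v i * (A *ᵥ u) i := fun i _ =>
    mul_nonneg (hv i) (zero_mulVec_nonneg hA hu i)
  have h0 := le_antisymm h (Finset.sum_nonneg hn)
  have := (Finset.sum_eq_zero_iff_of_nonneg hn).1 h0 k (Finset.mem_univ k)
  exact (mul_eq_zero.1 this).resolve_left hk

lemma zero_dead {n : ℕ} {A : Matrix (Fin n) (Fin n) ℝ} (hA : Copositive A)
    {u : Fin n → ℝ} (hu : IsZeroOf A u) (k : Fin n) (hk : u k ≠ 0) : (A *ᵥ u) k = 0 :=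
  bil_dead hA hu hu.2.1 (bil_zero_eq hu).le k hk

/-- Subtracting from `x` the largest multiple of `u` that keeps it nonnegative makes a coordinate
in the support of `u` vanish. -/
lemma exists_sub_smul {n : ℕ} {x u : Fin n → ℝ} (hu : ∀ i, 0 ≤ u i)
    (hu0 : u ≠ 0) (hx : ∀ i, 0 ≤ x i) :
    ∃ t : ℝ, ∃ k, u k ≠ 0 ∧ (∀ i, 0 ≤ (x + (-t) • u) i) ∧ (x + (-t) • u) k = 0 := by
  obtain ⟨k₀, hk₀⟩ := Function.ne_iff.1 hu0
  obtain ⟨k, hk, hmin⟩ := Finset.exists_min_image (Finset.univ.filter fun i => u i ≠ 0)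
    (fun i => x i / u i) ⟨k₀, by simpa using hk₀⟩
  simp only [Finset.mem_filter, Finset.mem_univ, true_and] at hk hmin
  refine ⟨x k / u k, k, hk, fun i => ?_, ?_⟩
  · by_cases hi : u i = 0
    · simpa [hi] using hx i
    · have h := hmin i hi
      have hp : 0 < u i := lt_of_le_of_ne (hu i) (Ne.symm hi)
      rw [le_div_iff₀ hp] at h
      simp only [Pi.add_apply, Pi.smul_apply, smul_eq_mul]
      linarith
  · simp only [Pi.add_apply, Pi.smul_apply, smul_eq_mul]
    field_simp
    ring

/-! ### Irreducibility and zeros -/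

lemma Eij_symm {n : ℕ} (i j : Fin n) : (Eij i j).IsSymm := by
  ext a b
  simp only [transpose_apply, Eij]
  congr 1
  exact propext ⟨fun h => by tauto, fun h => by tauto⟩

lemma Eij_mulVec {n : ℕ} {i j : Fin n} (hij : i ≠ j) (x : Fin n → ℝ) (l : Fin n) :
    (Eij i j *ᵥ x) l = if l = i then x j else if l = j then x i else 0 := by
  simp only [mulVec, dotProduct, Eij]
  by_cases h1 : l = i
  · subst h1
    simp [hij]
  · by_cases h2 : l = j
    · subst h2
      simp [h1]
    · simp [h1, h2]

lemma bil_Eij {n : ℕ} {i j : Fin n} (hij : i ≠ j) (x y : Fin n → ℝ) :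
    bil (Eij i j) x y = x i * y j + x j * y i := by
  rw [bil_eq_sum]
  simp_rw [Eij_mulVec hij]
  rw [Fintype.sum_eq_add i j hij]
  · simp [hij.symm]
  · rintro k ⟨h1, h2⟩
    simp [h1, h2]

lemma bil_sub_smul_mat {n : ℕ} (A M : Matrix (Fin n) (Fin n) ℝ) (γ : ℝ) (x y : Fin n → ℝ) :
    bil (A - γ • M) x y = bil A x y - γ * bil M x y := by
  simp [bil, sub_mulVec, smul_mulVec, dotProduct_sub]

/-- `A - γ E_{ij}` takes a negative value on the face of the nonnegative orthant spanned
by `I`. -/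
def Violates {n : ℕ} (A : Matrix (Fin n) (Fin n) ℝ) (i j : Fin n) (I : Finset (Fin n))
    (γ : ℝ) : Prop :=
  ∃ x : Fin n → ℝ, (∀ k, 0 ≤ x k) ∧ (∀ k, k ∉ I → x k = 0) ∧ bil (A - γ • Eij i j) x x < 0

lemma Violates.mono {n : ℕ} {A : Matrix (Fin n) (Fin n) ℝ} {i j : Fin n} (hij : i ≠ j)
    {I : Finset (Fin n)} {γ γ' : ℝ} (h : γ ≤ γ') (hv : Violates A i j I γ) :
    Violates A i j I γ' := by
  obtain ⟨x, hx, hI, hq⟩ := hv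
  refine ⟨x, hx, hI, ?_⟩
  rw [bil_sub_smul_mat] at *
  have : 0 ≤ bil (Eij i j) x x := by
    rw [bil_Eij hij]
    have := mul_nonneg (hx i) (hx j)
    linarith
  nlinarith

lemma continuous_bil {n : ℕ} (A : Matrix (Fin n) (Fin n) ℝ) : Continuous fun x => bil A x x := by
  unfold bil dotProduct mulVec dotProduct
  fun_prop

/-- If the form of `A - γ E_{ij}` takes a negative value on the face of the orthant spanned by `I`,
its minimiser `x` over the corresponding face of the simplex satisfies `(A x)_l ≤ γ` on the support
of `x`: shrinking a coordinate cannot decrease a form whose minimum over the simplex is negative,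
so `A x - γ E_{ij} x` is nonpositive there. -/
lemma exists_minimiser {n : ℕ} {A : Matrix (Fin n) (Fin n) ℝ} (hA : A.IsSymm) {i j : Fin n}
    (hij : i ≠ j) {I : Finset (Fin n)} {γ : ℝ} (hγ : 0 < γ) (hv : Violates A i j I γ) :
    ∃ x : Fin n → ℝ, (∀ k, 0 ≤ x k) ∧ ∑ k, x k = 1 ∧ (∀ k, k ∉ I → x k = 0) ∧
      bil (A - γ • Eij i j) x x < 0 ∧ ∀ l, x l ≠ 0 → (A *ᵥ x) l ≤ γ := by
  set B := A - γ • Eij i j with hB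
  have hBs : B.IsSymm := by
    rw [hB, Matrix.IsSymm, transpose_sub, transpose_smul, hA.eq, (Eij_symm i j).eq]
  obtain ⟨y, hy, hyI, hyq⟩ := hv
  let K : Set (Fin n → ℝ) := stdSimplex ℝ (Fin n) ∩ {x | ∀ k, k ∉ I → x k = 0}
  have hclosed : IsClosed {x : Fin n → ℝ | ∀ k, k ∉ I → x k = 0} := by
    simp only [Set.ofPred_forall]
    exact isClosed_iInter fun k => isClosed_iInter fun _ =>
      isClosed_eq (continuous_apply k) continuous_const
  have hK : IsCompact K := (isCompact_stdSimplex ℝ (Fin n)).inter_right hclosed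
  have hscale : ∀ z : Fin n → ℝ, (∀ k, 0 ≤ z k) → (∀ k, k ∉ I → z k = 0) → bil B z z < 0 →
      0 < ∑ k, z k ∧ (∑ k, z k)⁻¹ • z ∈ K := by
    intro z hz hzI hzq
    have hpos : 0 < ∑ k, z k := by
      refine lt_of_le_of_ne (Finset.sum_nonneg fun k _ => hz k) fun h0 => ?_
      have : z = 0 := by
        ext k
        exact (Finset.sum_eq_zero_iff_of_nonneg fun k _ => hz k).1 h0.symm k (Finset.mem_univ k)
      rw [this] at hzq
      simp [bil] at hzq
    refine ⟨hpos, ⟨fun k => ?_, ?_⟩, fun k hk => ?_⟩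
    · exact mul_nonneg (inv_nonneg.2 hpos.le) (hz k)
    · simp only [Pi.smul_apply, smul_eq_mul, ← Finset.mul_sum]
      exact inv_mul_cancel₀ hpos.ne'
    · simp [hzI k hk]
  have hbs : ∀ (c : ℝ) (z : Fin n → ℝ), bil B (c • z) (c • z) = c ^ 2 * bil B z z := by
    intro c z
    simp only [bil, mulVec_smul, smul_dotProduct, dotProduct_smul, smul_eq_mul]
    ring
  obtain ⟨hypos, hyK⟩ := hscale y hy hyI hyq
  obtain ⟨x, ⟨hxs, hxI⟩, hmin⟩ := hK.exists_isMinOn ⟨_, hyK⟩ (continuous_bil B).continuousOn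
  have hneg : bil B x x < 0 := by
    refine lt_of_le_of_lt (hmin hyK) ?_
    simp only [hbs]
    exact mul_neg_of_pos_of_neg (by positivity) hyq
  refine ⟨x, hxs.1, hxs.2, hxI, hneg, fun l hl => ?_⟩
  have hlpos : 0 < x l := lt_of_le_of_ne (hxs.1 l) (Ne.symm hl)
  have hl1 : x l ≤ 1 := by
    rw [← hxs.2]
    exact Finset.single_le_sum (fun k _ => hxs.1 k) (Finset.mem_univ l)
  -- shrinking the coordinate `l` does not decrease the form, since its minimum is negative
  have hvar : ∀ t : ℝ, 0 < t → t < x l → 2 * (B *ᵥ x) l ≤ t * B l l := by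
    intro t ht htl
    set z := x + (-t) • Pi.single l (1 : ℝ) with hz
    have hzq : bil B x x ≤ bil B z z := by
      by_contra! hlt
      have hz0 : ∀ k, 0 ≤ z k := by
        intro k
        by_cases hk : k = l
        · subst hk; simp [hz]; linarith
        · simpa [hz, hk] using hxs.1 k
      have hzI : ∀ k, k ∉ I → z k = 0 := by
        intro k hk
        have hkl : k ≠ l := by rintro rfl; exact hl (hxI k hk)
        simp [hz, hkl, hxI k hk]
      obtain ⟨hs, hzK⟩ := hscale z hz0 hzI (hlt.trans hneg)
      have hs1 : ∑ k, z k ≤ 1 := by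
        rw [← hxs.2]
        refine Finset.sum_le_sum fun k _ => ?_
        by_cases hk : k = l
        · subst hk; simp [hz]; linarith
        · simp [hz, hk]
      have h1 : bil B x x ≤ bil B ((∑ k, z k)⁻¹ • z) ((∑ k, z k)⁻¹ • z) := hmin hzK
      rw [hbs] at h1
      have h2 : 1 ≤ ((∑ k, z k)⁻¹) ^ 2 := one_le_pow₀ ((one_le_inv₀ hs).2 hs1)
      nlinarith
    rw [hz, bil_add_smul hBs, bil_single_right hBs, bil_single_single] at hzq
    have : t * (2 * (B *ᵥ x) l) ≤ t * (t * B l l) := by nlinarith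
    exact le_of_mul_le_mul_left this ht
  have hBl : (B *ᵥ x) l ≤ 0 := by
    by_contra! hpos
    have hb : 0 < B l l := by
      have h := hvar (x l / 2) (by linarith) (by linarith)
      by_contra! hb
      nlinarith
    have h := hvar (min (x l / 2) ((B *ᵥ x) l / B l l)) (lt_min (by linarith) (by positivity))
      (lt_of_le_of_lt (min_le_left _ _) (by linarith))
    have h2 : min (x l / 2) ((B *ᵥ x) l / B l l) * B l l ≤ (B *ᵥ x) l := by
      calc _ ≤ (B *ᵥ x) l / B l l * B l l := by gcongr; exact min_le_right _ _
        _ = _ := by field_simp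
    linarith
  have hBA : (B *ᵥ x) l = (A *ᵥ x) l - γ * (Eij i j *ᵥ x) l := by
    simp [hB, sub_mulVec, smul_mulVec]
  have hE : (Eij i j *ᵥ x) l ≤ 1 := by
    have h1 : ∀ k, x k ≤ 1 := fun k => by
      rw [← hxs.2]
      exact Finset.single_le_sum (fun k _ => hxs.1 k) (Finset.mem_univ k)
    rw [Eij_mulVec hij]
    split_ifs
    · exact h1 j
    · exact h1 i
    · exact zero_le_one
  nlinarith

/-- The zero certifying irreducibility with respect to `E_{ij}`: its support meets `{i, j}`, and
`A u` vanishes at `i` and `j`. It is a limit, as `γ → 0`, of minimisers of the form of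
`A - γ E_{ij}` over a minimal face of the simplex on which all these forms take negative values. -/
lemma exists_zero_of_irreducible {n : ℕ} {A : Matrix (Fin n) (Fin n) ℝ} (hA : Copositive A)
    {i j : Fin n} (hij : i ≠ j) (hirr : IrreducibleWrtMat A (Eij i j)) :
    ∃ u, IsZeroOf A u ∧ (A *ᵥ u) i = 0 ∧ (A *ᵥ u) j = 0 ∧ (u i ≠ 0 ∨ u j ≠ 0) := by
  have hBs : ∀ γ : ℝ, (A - γ • Eij i j).IsSymm := fun γ => by
    rw [Matrix.IsSymm, transpose_sub, transpose_smul, hA.1.eq, (Eij_symm i j).eq]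
  have huniv : ∀ γ : ℝ, 0 < γ → Violates A i j Finset.univ γ := by
    intro γ hγ
    by_contra hno
    refine hirr ⟨γ, hγ, hBs γ, fun x hx => ?_⟩
    by_contra! hlt
    exact hno ⟨x, hx, by simp, hlt⟩
  -- a face minimal among those on which all `A - γ E_{ij}` take negative values
  obtain ⟨I, hI, hImin⟩ : ∃ I : Finset (Fin n), (∀ γ : ℝ, 0 < γ → Violates A i j I γ) ∧
      ∀ J, J ⊂ I → ¬ ∀ γ : ℝ, 0 < γ → Violates A i j J γ := by
    obtain ⟨I, hI⟩ := (Set.toFinite {I : Finset (Fin n) | ∀ γ : ℝ, 0 < γ →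
      Violates A i j I γ}).exists_minimal ⟨_, huniv⟩
    exact ⟨I, hI.1, fun J hJ hJ' => hJ.2 (hI.2 hJ' hJ.1)⟩
  obtain ⟨γ₀, hγ₀, hγ₀I⟩ : ∃ γ₀ : ℝ, 0 < γ₀ ∧ ∀ k ∈ I, ∀ γ : ℝ, γ ≤ γ₀ →
      ¬ Violates A i j (I.erase k) γ := by
    have h : ∀ k ∈ I, ∀ᶠ γ : ℝ in nhdsWithin 0 (Set.Ioi 0),
        ∀ γ' : ℝ, γ' ≤ γ → ¬ Violates A i j (I.erase k) γ' := by
      intro k hk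
      have := hImin _ (Finset.erase_ssubset hk)
      push Not at this
      obtain ⟨γ, hγ, hγv⟩ := this
      filter_upwards [Ioc_mem_nhdsGT hγ] with δ hδ δ' hδ' hv
      exact hγv (hv.mono hij (hδ'.trans hδ.2))
    have h' := ((Filter.eventually_all_finset I).2 h).and self_mem_nhdsWithin
    obtain ⟨γ, h1, h2⟩ := h'.exists
    exact ⟨γ, h2, h1⟩
  have hex : ∀ m : ℕ, ∃ x : Fin n → ℝ, (∀ k, 0 ≤ x k) ∧ ∑ k, x k = 1 ∧ (∀ k, k ∉ I → x k = 0) ∧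
      bil (A - (γ₀ / (m + 1)) • Eij i j) x x < 0 ∧
      ∀ l, x l ≠ 0 → (A *ᵥ x) l ≤ γ₀ / (m + 1) := fun m =>
    exists_minimiser hA.1 hij (by positivity) (hI _ (by positivity))
  choose x hx0 hx1 hxI hxq hxA using hex
  have hle : ∀ m : ℕ, γ₀ / (m + 1) ≤ γ₀ := fun m =>
    div_le_self hγ₀.le (by linarith [(Nat.cast_nonneg m : (0 : ℝ) ≤ m)])
  have hxpos : ∀ m, ∀ k ∈ I, x m k ≠ 0 := by
    intro m k hk h0
    refine hγ₀I k hk _ (hle m) ⟨x m, hx0 m, fun l hl => ?_, hxq m⟩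
    by_cases hlk : l = k
    · rw [hlk, h0]
    · exact hxI m l fun hlI => hl (Finset.mem_erase.2 ⟨hlk, hlI⟩)
  obtain ⟨u, hu, φ, hφ, hlim⟩ := (isCompact_stdSimplex ℝ (Fin n)).tendsto_subseq
    (x := x) (fun m => ⟨hx0 m, hx1 m⟩)
  have hγlim : Filter.Tendsto (fun m => γ₀ / ((φ m : ℝ) + 1)) Filter.atTop (nhds 0) := by
    have := (tendsto_one_div_add_atTop_nhds_zero_nat (𝕜 := ℝ)).const_mul γ₀
    simp only [mul_zero, mul_one_div] at this
    exact this.comp hφ.tendsto_atTop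
  have huI : ∀ k, k ∉ I → u k = 0 := fun k hk =>
    tendsto_nhds_unique ((tendsto_pi_nhds.1 hlim) k) (by
      simp [hxI _ k hk])
  have hune : u ≠ 0 := by
    rintro rfl
    simpa using hu.2
  have huz : IsZeroOf A u := by
    refine ⟨hune, hu.1, le_antisymm ?_ (hA.2 u hu.1)⟩
    have h1 : Filter.Tendsto (fun m => bil A (x (φ m)) (x (φ m))) Filter.atTop
        (nhds (bil A u u)) := ((continuous_bil A).tendsto u).comp hlim
    have h2 : Filter.Tendsto (fun m => γ₀ / ((φ m : ℝ) + 1) *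
        bil (Eij i j) (x (φ m)) (x (φ m))) Filter.atTop (nhds (0 * bil (Eij i j) u u)) :=
      hγlim.mul (((continuous_bil _).tendsto u).comp hlim)
    rw [zero_mul] at h2
    refine le_of_tendsto_of_tendsto' h1 h2 fun m => ?_
    have := hxq (φ m)
    rw [bil_sub_smul_mat] at this
    linarith
  have huA : ∀ l ∈ I, (A *ᵥ u) l = 0 := by
    intro l hl
    refine le_antisymm ?_ (zero_mulVec_nonneg hA huz l)
    have hc : Continuous fun y : Fin n → ℝ => (A *ᵥ y) l := by
      unfold mulVec dotProduct
      fun_prop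
    exact le_of_tendsto_of_tendsto' ((hc.tendsto u).comp hlim) hγlim
      fun m => hxA (φ m) l (hxpos _ l hl)
  have hiI : i ∈ I ∧ j ∈ I := by
    have h := hxq 0
    rw [bil_sub_smul_mat, bil_Eij hij] at h
    have h0 : 0 ≤ bil A (x 0) (x 0) := hA.2 _ (hx0 0)
    constructor
    · by_contra hi
      rw [hxI 0 i hi] at h
      simp at h; linarith
    · by_contra hi
      rw [hxI 0 j hi] at h
      simp at h; linarith
  refine ⟨u, huz, huA i hiI.1, huA j hiI.2, ?_⟩
  by_contra! hcon
  -- otherwise subtracting a multiple of `u` from `x 0` would give a violator with smaller support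
  obtain ⟨t, k, hk, hnn, hk0⟩ := exists_sub_smul hu.1 hune (hx0 0)
  have hkI : k ∈ I := by
    by_contra h
    exact hk (huI k h)
  refine hγ₀I k hkI _ (hle 0) ⟨_, hnn, fun l hl => ?_, ?_⟩
  · by_cases hlk : l = k
    · rw [hlk, hk0]
    · have hlI : l ∉ I := fun hlI => hl (Finset.mem_erase.2 ⟨hlk, hlI⟩)
      simp [hxI 0 l hlI, huI l hlI]
  · have h1 : bil A (x 0) u = 0 := by
      rw [bil_eq_sum]
      refine Finset.sum_eq_zero fun l _ => ?_
      by_cases hl : l ∈ I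
      · rw [huA l hl, mul_zero]
      · rw [hxI 0 l hl, zero_mul]
    rw [bil_add_smul (hBs _)]
    have h2 := hxq 0
    have h3 : bil (A - (γ₀ / ((0 : ℕ) + 1)) • Eij i j) (x 0) u = 0 := by
      rw [bil_sub_smul_mat, h1, bil_Eij hij, hcon.1, hcon.2]; ring
    have h4 : bil (A - (γ₀ / ((0 : ℕ) + 1)) • Eij i j) u u = 0 := by
      rw [bil_sub_smul_mat, bil_zero_eq huz, bil_Eij hij, hcon.1, hcon.2]; ring
    rw [h3, h4]
    linarith

/-! ### Separating hyperplanes and angles -/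

/-- The volume of the part of the unit ball whose points `g` define a hyperplane `g^⊥` separating
`a` and `b`. A vector on the hyperplane counts as lying on the negative side. -/
noncomputable def sepVol (a b : EuclideanSpace ℝ (Fin 5)) : ℝ :=
  MeasureTheory.volume.real {g ∈ Metric.ball (0 : EuclideanSpace ℝ (Fin 5)) 1 |
    ¬ (0 < inner ℝ g a ↔ 0 < inner ℝ g b)}

/-- The volume of the unit ball of `ℝ⁵`. -/
noncomputable def ballVol : ℝ :=
  MeasureTheory.volume.real (Metric.ball (0 : EuclideanSpace ℝ (Fin 5)) 1)

lemma measurableSet_pos (a : EuclideanSpace ℝ (Fin 5)) :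
    MeasurableSet {g : EuclideanSpace ℝ (Fin 5) | 0 < inner ℝ g a} :=
  (isOpen_lt continuous_const (by fun_prop)).measurableSet

lemma measurableSet_sep (a b : EuclideanSpace ℝ (Fin 5)) :
    MeasurableSet {g ∈ Metric.ball (0 : EuclideanSpace ℝ (Fin 5)) 1 |
      ¬ (0 < inner ℝ g a ↔ 0 < inner ℝ g b)} := by
  refine Metric.isOpen_ball.measurableSet.inter ?_
  exact (((measurableSet_pos a).mem).iff ((measurableSet_pos b).mem)).setOf.compl

lemma ballVol_pos : 0 < ballVol :=
  ENNReal.toReal_pos (Metric.measure_ball_pos _ _ one_pos).ne' MeasureTheory.measure_ball_lt_top.ne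

lemma sep_finite (a b : EuclideanSpace ℝ (Fin 5)) :
    MeasureTheory.volume {g ∈ Metric.ball (0 : EuclideanSpace ℝ (Fin 5)) 1 |
      ¬ (0 < inner ℝ g a ↔ 0 < inner ℝ g b)} ≠ ⊤ :=
  (lt_of_le_of_lt (MeasureTheory.measure_mono (Set.sep_subset _ _)) MeasureTheory.measure_ball_lt_top).ne

lemma sepVol_nonneg (a b : EuclideanSpace ℝ (Fin 5)) : 0 ≤ sepVol a b :=
  MeasureTheory.measureReal_nonneg

lemma sepVol_le (a b : EuclideanSpace ℝ (Fin 5)) : sepVol a b ≤ ballVol :=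
  MeasureTheory.measureReal_mono (Set.sep_subset _ _) MeasureTheory.measure_ball_lt_top.ne

open MeasureTheory in
/-- Replacing `b` by `-b` complements the set of separating hyperplanes, up to the null set of
those containing `b`. -/
lemma sepVol_neg_right (a : EuclideanSpace ℝ (Fin 5)) {b : EuclideanSpace ℝ (Fin 5)} (hb : b ≠ 0) :
    sepVol a (-b) = ballVol - sepVol a b := by
  have hnull : volume {g : EuclideanSpace ℝ (Fin 5) | inner ℝ g b = 0} = 0 := by
    have h := Measure.addHaar_submodule (volume : Measure (EuclideanSpace ℝ (Fin 5)))
      (ℝ ∙ b)ᗮ (by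
        intro h
        have hmem : b ∈ (ℝ ∙ b)ᗮ := h ▸ Submodule.mem_top
        rw [Submodule.mem_orthogonal_singleton_iff_inner_left] at hmem
        exact hb (inner_self_eq_zero.1 hmem))
    convert h using 2
    ext g
    simp [Submodule.mem_orthogonal_singleton_iff_inner_left]
  have h1 : sepVol a (-b) = volume.real (Metric.ball (0 : EuclideanSpace ℝ (Fin 5)) 1 \
      {g ∈ Metric.ball (0 : EuclideanSpace ℝ (Fin 5)) 1 |
      ¬ (0 < inner ℝ g a ↔ 0 < inner ℝ g b)}) := by
    refine measureReal_congr ?_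
    have hae : ∀ᵐ g : EuclideanSpace ℝ (Fin 5), inner ℝ g b ≠ 0 := by
      rw [ae_iff]; simpa using hnull
    filter_upwards [hae] with g hg
    refine propext ?_
    change (g ∈ Metric.ball 0 1 ∧ ¬ (0 < inner ℝ g a ↔ 0 < inner ℝ g (-b))) ↔
      (g ∈ Metric.ball 0 1 ∧ ¬ (g ∈ Metric.ball 0 1 ∧ ¬ (0 < inner ℝ g a ↔ 0 < inner ℝ g b)))
    have : 0 < inner ℝ g (-b) ↔ ¬ 0 < inner ℝ g b := by
      rw [inner_neg_right, not_lt, neg_pos]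
      exact ⟨le_of_lt, fun h => lt_of_le_of_ne h hg⟩
    rw [this]
    tauto
  rw [h1, measureReal_sdiff (Set.sep_subset _ _) (measurableSet_sep a b)]
  · rfl

open MeasureTheory in
lemma sepVol_map (R : EuclideanSpace ℝ (Fin 5) ≃ₗᵢ[ℝ] EuclideanSpace ℝ (Fin 5))
    (a b : EuclideanSpace ℝ (Fin 5)) : sepVol (R a) (R b) = sepVol a b := by
  unfold sepVol
  rw [← R.measurePreserving.measureReal_preimage (measurableSet_sep _ _).nullMeasurableSet]
  congr 1
  ext g
  simp

open MeasureTheory in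
/-- When `b` lies in the cone spanned by `a` and `c`, a hyperplane separating `a` from `c` separates
exactly one of the pairs `a, b` and `b, c`. -/
lemma sepVol_add {a b c : EuclideanSpace ℝ (Fin 5)} {p : ℝ} (hp : 0 < p) (h : p • b = a + c) :
    sepVol a c = sepVol a b + sepVol b c := by
  unfold sepVol
  rw [← measureReal_union _ (measurableSet_sep b c) (sep_finite a b) (sep_finite b c)]
  · congr 1
    ext g
    have hg : p * inner ℝ g b = inner ℝ g a + inner ℝ g c := by
      rw [← inner_smul_right, h, inner_add_right]
    have h1 : 0 < inner ℝ g a → 0 < inner ℝ g c → 0 < inner ℝ g b := by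
      intro ha hc
      by_contra! hb
      nlinarith
    have h2 : ¬ 0 < inner ℝ g a → ¬ 0 < inner ℝ g c → ¬ 0 < inner ℝ g b := by
      intro ha hc hb
      nlinarith
    simp only [Set.mem_ofPred_eq, Set.mem_union]
    tauto
  · rw [Set.disjoint_left]
    rintro g ⟨-, hg1⟩ ⟨-, hg2⟩
    have hg : p * inner ℝ g b = inner ℝ g a + inner ℝ g c := by
      rw [← inner_smul_right, h, inner_add_right]
    have h1 : 0 < inner ℝ g a → 0 < inner ℝ g c → 0 < inner ℝ g b := by
      intro ha hc
      by_contra! hb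
      nlinarith
    have h2 : ¬ 0 < inner ℝ g a → ¬ 0 < inner ℝ g c → ¬ 0 < inner ℝ g b := by
      intro ha hc hb
      nlinarith
    tauto

open InnerProductGeometry in
/-- For a pair of unit vectors at an angle of at most `π / 2`, the reflection `c` of `a` in the line
of `b` doubles both the angle and the separated volume. -/
lemma sepVol_step {a b : EuclideanSpace ℝ (Fin 5)} (ha : ‖a‖ = 1) (hb : ‖b‖ = 1)
    (hab : 0 ≤ inner ℝ a b) :
    ∃ c : EuclideanSpace ℝ (Fin 5), ‖c‖ = 1 ∧ angle a c = 2 * angle a b ∧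
      sepVol a c = 2 * sepVol a b := by
  set R := (ℝ ∙ b).reflection with hR
  have hRb : R b = b := by simp [hR, Submodule.reflection_singleton_apply, hb, two_smul]
  have hRa : R a = (2 * inner ℝ a b) • b - a := by
    rw [hR, Submodule.reflection_singleton_apply, real_inner_comm b a]
    simp [hb, two_smul, two_mul, add_smul]
  have hbc : sepVol b (R a) = sepVol a b := by
    rw [← sepVol_map R a b, hRb]
    unfold sepVol
    congr 1
    ext g
    simp only [Set.mem_ofPred_eq]
    tauto
  have hc : ‖R a‖ = 1 := by rw [R.norm_map, ha]
  refine ⟨R a, hc, ?_, ?_⟩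
  · unfold angle
    rw [ha, hb, hc, hRa, inner_sub_right, inner_smul_right, real_inner_self_eq_norm_sq, ha]
    simp only [mul_one, div_one, one_pow]
    have hle : inner ℝ a b ≤ 1 := by
      have := real_inner_le_norm a b
      rwa [ha, hb, mul_one] at this
    have h1 := Real.cos_arccos (x := inner ℝ a b) (by linarith) hle
    have h2 : 2 * inner ℝ a b * inner ℝ a b - 1 = Real.cos (2 * Real.arccos (inner ℝ a b)) := by
      rw [Real.cos_two_mul, h1]; ring
    rw [h2, Real.arccos_cos]
    · have := Real.arccos_nonneg (inner ℝ a b); linarith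
    · have := Real.arccos_le_pi_div_two.2 hab; linarith
  · rcases hab.eq_or_lt with h0 | hpos
    · have hb0 : b ≠ 0 := by rintro rfl; simp at hb
      have ha0 : a ≠ 0 := by rintro rfl; simp at ha
      rw [← h0] at hRa
      simp only [mul_zero, zero_smul, zero_sub] at hRa
      have h1 : sepVol a a = 0 := by simp [sepVol]
      have h2 := sepVol_neg_right a ha0
      have h3 := sepVol_neg_right b ha0
      have h4 : sepVol b a = sepVol a b := by
        unfold sepVol
        congr 1
        ext g
        simp only [Set.mem_ofPred_eq]
        tauto
      rw [hRa] at hbc ⊢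
      rw [h2, h1]
      rw [h3, h4] at hbc
      linarith
    · rw [sepVol_add (a := a) (b := b) (c := R a) (p := 2 * inner ℝ a b) (by linarith)
        (by rw [hRa]; abel), hbc]
      ring

open InnerProductGeometry in
/-- The separated volume is proportional to the angle. By `sepVol_step`, a bound on the error for
all pairs of unit vectors improves to half that bound, so the error is zero. -/
lemma sepVol_eq {a b : EuclideanSpace ℝ (Fin 5)} (ha : ‖a‖ = 1) (hb : ‖b‖ = 1) :
    sepVol a b = angle a b / Real.pi * ballVol := by
  have hπ := Real.pi_pos
  have key : ∀ n : ℕ, ∀ a b : EuclideanSpace ℝ (Fin 5), ‖a‖ = 1 → ‖b‖ = 1 →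
      |sepVol a b - angle a b / Real.pi * ballVol| ≤ ballVol * (1 / 2) ^ n := by
    intro n
    induction n with
    | zero =>
      intro a b ha hb
      have h1 := sepVol_nonneg a b
      have h2 := sepVol_le a b
      have h3 : 0 ≤ angle a b / Real.pi := div_nonneg (angle_nonneg a b) hπ.le
      have h4 : angle a b / Real.pi ≤ 1 := (div_le_one hπ).2 (angle_le_pi a b)
      have := ballVol_pos
      rw [abs_le]
      constructor <;> nlinarith
    | succ n ih =>
      have acute : ∀ a b : EuclideanSpace ℝ (Fin 5), ‖a‖ = 1 → ‖b‖ = 1 → 0 ≤ inner ℝ a b →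
          |sepVol a b - angle a b / Real.pi * ballVol| ≤ ballVol * (1 / 2) ^ (n + 1) := by
        intro a b ha hb hab
        obtain ⟨c, hc, hang, hvol⟩ := sepVol_step ha hb hab
        have := ih a c ha hc
        rw [hang, hvol, show 2 * sepVol a b - 2 * angle a b / Real.pi * ballVol
          = 2 * (sepVol a b - angle a b / Real.pi * ballVol) by ring, abs_mul, abs_two] at this
        rw [pow_succ]
        linarith
      intro a b ha hb
      rcases le_total 0 (inner ℝ a b) with h | h
      · exact acute a b ha hb h
      · have hb0 : b ≠ 0 := by rintro rfl; simp at hb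
        have := acute a (-b) ha (by simpa using hb) (by rw [inner_neg_right]; linarith)
        rw [sepVol_neg_right a hb0, angle_neg_right, sub_div, div_self hπ.ne'] at this
        rw [← abs_neg]
        convert this using 2
        ring
  have hlim : Filter.Tendsto (fun n : ℕ => ballVol * (1 / 2 : ℝ) ^ n) Filter.atTop (nhds 0) := by
    simpa using (tendsto_pow_atTop_nhds_zero_of_lt_one (r := (1 / 2 : ℝ)) (by norm_num)
      (by norm_num)).const_mul ballVol
  have := ge_of_tendsto' hlim fun n => key n a b ha hb
  exact sub_eq_zero.1 (abs_eq_zero.1 (le_antisymm this (abs_nonneg _)))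

open MeasureTheory in
/-- A hyperplane separates at most `2 * 3 = 6` of the ten pairs formed by five vectors. -/
lemma sum_sepVol_le (a : Fin 5 → EuclideanSpace ℝ (Fin 5)) :
    ∑ i, ∑ j ∈ Finset.univ.filter (fun j => i < j), sepVol (a i) (a j) ≤ 6 * ballVol := by
  classical
  let B := Metric.ball (0 : EuclideanSpace ℝ (Fin 5)) 1
  let S : Fin 5 → Fin 5 → Set (EuclideanSpace ℝ (Fin 5)) := fun i j =>
    {g ∈ B | ¬ (0 < inner ℝ g (a i) ↔ 0 < inner ℝ g (a j))}
  have hS : ∀ i j, sepVol (a i) (a j) = ∫ g, (S i j).indicator 1 g := fun i j =>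
    (integral_indicator_one (measurableSet_sep _ _)).symm
  have hSint : ∀ i j, Integrable ((S i j).indicator (1 : EuclideanSpace ℝ (Fin 5) → ℝ)) :=
    fun i j => (integrable_indicator_iff (measurableSet_sep _ _)).2
      (integrableOn_const (sep_finite _ _))
  have hB : 6 * ballVol = ∫ g, 6 * B.indicator (1 : EuclideanSpace ℝ (Fin 5) → ℝ) g := by
    rw [integral_const_mul, integral_indicator_one Metric.isOpen_ball.measurableSet]
    rfl
  have hBint : Integrable (B.indicator (1 : EuclideanSpace ℝ (Fin 5) → ℝ)) :=
    (integrable_indicator_iff Metric.isOpen_ball.measurableSet).2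
      (integrableOn_const MeasureTheory.measure_ball_lt_top.ne)
  simp_rw [hS]
  rw [hB, ← Finset.sum_congr rfl fun i _ => integral_finsetSum _ fun j _ => hSint i j,
    ← integral_finsetSum _ fun i _ => integrable_finsetSum _ fun j _ => hSint i j]
  refine integral_mono (integrable_finsetSum _ fun i _ => integrable_finsetSum _
    fun j _ => hSint i j) (hBint.const_mul 6) fun g => ?_
  by_cases hg : g ∈ B
  · let s : Fin 5 → Bool := fun i => decide (0 < inner ℝ g (a i))
    have h1 : ∀ i j, (S i j).indicator (1 : EuclideanSpace ℝ (Fin 5) → ℝ) g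
        = ((if s i = s j then 0 else 1 : ℕ) : ℝ) := by
      intro i j
      simp only [Set.indicator_apply, S, s, Set.mem_ofPred_eq, hg, true_and, Pi.one_apply,
        decide_eq_decide]
      split_ifs <;> simp_all
    have hcount : ∀ s : Fin 5 → Bool, ∑ i, ∑ j ∈ Finset.univ.filter (fun j => i < j),
        (if s i = s j then 0 else 1 : ℕ) ≤ 6 := by decide
    simp only [h1, Set.indicator_of_mem hg, Pi.one_apply, mul_one]
    exact_mod_cast hcount s
  · have h1 : ∀ i j, (S i j).indicator (1 : EuclideanSpace ℝ (Fin 5) → ℝ) g = 0 := fun i j =>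
      Set.indicator_of_notMem (fun h => hg h.1) _
    simp [h1, Set.indicator_of_notMem hg]

/-! ### Zeros of matrices of order five that are not positive semidefinite -/

/-- The form of `A` is nonnegative at a vector supported where `A w` vanishes and nonnegative off
the support of the zero `w`: adding a large multiple of `w` makes the vector nonnegative without
changing the value of the form. -/
lemma nonneg_of_dead {n : ℕ} {A : Matrix (Fin n) (Fin n) ℝ} (hA : Copositive A)
    {w y : Fin n → ℝ} (hw : IsZeroOf A w) (hy : ∀ k, (A *ᵥ w) k ≠ 0 → y k = 0)
    (hy' : ∀ k, w k = 0 → 0 ≤ y k) : 0 ≤ bil A y y := by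
  set M : ℝ := ∑ k, |y k| / w k with hM
  have hterm : ∀ k, 0 ≤ |y k| / w k := fun k => div_nonneg (abs_nonneg _) (hw.2.1 k)
  have hpos : ∀ k, 0 ≤ (y + M • w) k := by
    intro k
    by_cases hk : w k = 0
    · simpa [hk] using hy' k hk
    · have hp : 0 < w k := lt_of_le_of_ne (hw.2.1 k) (Ne.symm hk)
      have h1 : |y k| / w k ≤ M :=
        Finset.single_le_sum (fun k _ => hterm k) (Finset.mem_univ k)
      rw [div_le_iff₀ hp] at h1
      have := neg_abs_le (y k)
      simp only [Pi.add_apply, Pi.smul_apply, smul_eq_mul]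
      linarith
  have h : 0 ≤ bil A (y + M • w) (y + M • w) := hA.2 _ hpos
  have h0 : bil A y w = 0 := by
    rw [bil_eq_sum]
    refine Finset.sum_eq_zero fun k _ => ?_
    by_cases hk : (A *ᵥ w) k = 0
    · rw [hk, mul_zero]
    · rw [hy k hk, zero_mul]
  rw [bil_add_smul hA.1, h0, bil_zero_eq hw] at h
  linarith

/-- If at most one index where `A w` vanishes lies outside the support of the zero `w`, then
`A` is positive semidefinite on the coordinate subspace where `A w` vanishes. -/
lemma nonneg_of_dead_card {n : ℕ} {A : Matrix (Fin n) (Fin n) ℝ} (hA : Copositive A)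
    {w y : Fin n → ℝ} (hw : IsZeroOf A w)
    (hone : ∀ k l, (A *ᵥ w) k = 0 → w k = 0 → (A *ᵥ w) l = 0 → w l = 0 → k = l)
    (hy : ∀ k, (A *ᵥ w) k ≠ 0 → y k = 0) : 0 ≤ bil A y y := by
  by_cases h : ∀ k, w k = 0 → 0 ≤ y k
  · exact nonneg_of_dead hA hw hy h
  · push Not at h
    obtain ⟨k, hk, hyk⟩ := h
    have hkd : (A *ᵥ w) k = 0 := by
      by_contra hne
      exact hyk.ne (hy k hne)
    have hneg : bil A (-y) (-y) = bil A y y := by simp [bil, mulVec_neg]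
    rw [← hneg]
    refine nonneg_of_dead hA hw (fun l hl => by simp [hy l hl]) fun l hl => ?_
    by_cases hld : (A *ᵥ w) l = 0
    · rw [← hone k l hkd hk hld hl]
      simpa using hyk.le
    · simp [hy l hld]

/-- By `nonneg_of_dead_card` the form of `A` is positive semidefinite on the coordinate subspace
where `A w` vanishes, so a zero `z` in that subspace lies in the kernel of the restricted form. -/
lemma dead_of_supp_subset {n : ℕ} {A : Matrix (Fin n) (Fin n) ℝ} (hA : Copositive A)
    (hdiag : ∀ i, A i i = 1) {w z : Fin n → ℝ} (hw : IsZeroOf A w) (hz : IsZeroOf A z)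
    (hone : ∀ k l, (A *ᵥ w) k = 0 → w k = 0 → (A *ᵥ w) l = 0 → w l = 0 → k = l)
    (hzw : ∀ k, (A *ᵥ w) k ≠ 0 → z k = 0) {k : Fin n} (hk : (A *ᵥ w) k = 0) :
    (A *ᵥ z) k = 0 := by
  have h := nonneg_of_dead_card hA hw (y := z + (-(A *ᵥ z) k) • Pi.single k (1 : ℝ)) hone
    (fun l hl => by
      have : l ≠ k := by rintro rfl; exact hl hk
      simp [hzw l hl, this])
  rw [bil_add_smul hA.1, bil_zero_eq hz, bil_single_right hA.1, bil_single_single, hdiag] at h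
  nlinarith

/-- The support of a vector, as a finset. -/
noncomputable def suppF {n : ℕ} (u : Fin n → ℝ) : Finset (Fin n) :=
  Finset.univ.filter fun k => u k ≠ 0

lemma mem_suppF {n : ℕ} {u : Fin n → ℝ} {k : Fin n} : k ∈ suppF u ↔ u k ≠ 0 := by
  simp [suppF]

lemma add_zeros {n : ℕ} {A : Matrix (Fin n) (Fin n) ℝ} (hA : Copositive A)
    {v w : Fin n → ℝ} (hv : IsZeroOf A v) (hw : IsZeroOf A w) (h : bil A v w = 0) :
    IsZeroOf A (v + w) := by
  refine ⟨fun h0 => hv.1 ?_, fun i => add_nonneg (hv.2.1 i) (hw.2.1 i), ?_⟩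
  · ext k
    have h1 := congrFun h0 k
    have := hv.2.1 k
    have := hw.2.1 k
    simp only [Pi.add_apply, Pi.zero_apply] at *
    linarith
  · have := bil_add_smul hA.1 v w 1
    rw [one_smul, bil_zero_eq hv, bil_zero_eq hw, h] at this
    change bil A _ _ = 0
    linarith

section Five

variable {A : Matrix (Fin 5) (Fin 5) ℝ}

/-- A copositive matrix with unit diagonal and no entry `-1` has no zero supported on two
indices. -/
lemma three_le_card (hA : Copositive A) (hdiag : ∀ i, A i i = 1)
    (hno : ∀ i j, i ≠ j → -1 < A i j) {u : Fin 5 → ℝ} (hu : IsZeroOf A u) :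
    3 ≤ (suppF u).card := by
  by_contra! hlt
  obtain ⟨T, hT, hT2⟩ := Finset.exists_superset_card_eq (s := suppF u) (n := 2) (by omega) (by simp)
  obtain ⟨a, b, hab, rfl⟩ := Finset.card_eq_two.1 hT2
  have hout : ∀ k, k ≠ a ∧ k ≠ b → u k = 0 := by
    rintro k ⟨h1, h2⟩
    by_contra hk
    have := hT (mem_suppF.2 hk)
    simp [h1, h2] at this
  have hmv : ∀ c, (A *ᵥ u) c = A c a * u a + A c b * u b := by
    intro c
    rw [mulVec, dotProduct, Fintype.sum_eq_add a b hab]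
    intro k hk
    rw [hout k hk, mul_zero]
  have ha := hno a b hab
  have hb := hno b a hab.symm
  have hua := hu.2.1 a
  have hub := hu.2.1 b
  have hda : u a ≠ 0 → u a + A a b * u b = 0 := fun h => by
    have := zero_dead hA hu a h
    rwa [hmv, hdiag, one_mul] at this
  have hdb : u b ≠ 0 → A b a * u a + u b = 0 := fun h => by
    have := zero_dead hA hu b h
    rwa [hmv, hdiag, one_mul] at this
  have h0 : u a = 0 ∧ u b = 0 := by
    by_cases h1 : u a = 0
    · refine ⟨h1, ?_⟩
      by_contra h2
      have := hdb h2
      rw [h1] at this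
      simp at this
      exact h2 this
    · by_cases h2 : u b = 0
      · have := hda h1
        rw [h2] at this
        simp at this
        exact absurd this h1
      · have e1 := hda h1
        have e2 := hdb h2
        have p1 : 0 < u a := lt_of_le_of_ne hua (Ne.symm h1)
        have p2 : 0 < u b := lt_of_le_of_ne hub (Ne.symm h2)
        nlinarith
  refine hu.1 (funext fun k => ?_)
  by_cases hka : k = a
  · rw [hka]; exact h0.1
  · by_cases hkb : k = b
    · rw [hkb]; exact h0.2
    · exact hout k ⟨hka, hkb⟩

/-- If `A` annihilates a zero then `A` is positive semidefinite. If that zero has only three nonzero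
entries, adding the zero attached to the two remaining indices gives a zero in the kernel with at
least four. -/
lemma nonneg_of_kernel (hA : Copositive A) (hdiag : ∀ i, A i i = 1)
    (hno : ∀ i j, i ≠ j → -1 < A i j)
    (hcov : ∀ i j, i ≠ j → ∃ u, IsZeroOf A u ∧ (A *ᵥ u) i = 0 ∧ (A *ᵥ u) j = 0 ∧
      (u i ≠ 0 ∨ u j ≠ 0))
    {u : Fin 5 → ℝ} (hu : IsZeroOf A u) (hAu : A *ᵥ u = 0) (y : Fin 5 → ℝ) :
    0 ≤ bil A y y := by
  -- a zero in the kernel with at least four nonzero entries suffices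
  have four : ∀ w, IsZeroOf A w → A *ᵥ w = 0 → (suppF w)ᶜ.card ≤ 1 → 0 ≤ bil A y y := by
    intro w hw hAw hcard
    refine nonneg_of_dead_card hA hw (fun k l _ hk _ hl => ?_) fun k hk => absurd (by simp [hAw]) hk
    exact Finset.card_le_one.1 hcard k (by simp [mem_suppF, hk]) l (by simp [mem_suppF, hl])
  by_cases h4 : (suppF u)ᶜ.card ≤ 1
  · exact four u hu hAu h4
  have h3 := three_le_card hA hdiag hno hu
  have hc := Finset.card_compl (suppF u)
  simp only [Fintype.card_fin] at hc
  obtain ⟨k, l, hkl, hset⟩ := Finset.card_eq_two.1 (show (suppF u)ᶜ.card = 2 by omega)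
  obtain ⟨z, hz, hzk, hzl, hzz⟩ := hcov k l hkl
  have hbil : bil A u z = 0 := by
    rw [bil_comm hA.1, bil_eq_sum]
    simp [hAu]
  have hAz : A *ᵥ z = 0 := by
    ext c
    by_cases hcu : u c = 0
    · have : c ∈ (suppF u)ᶜ := by simp [mem_suppF, hcu]
      rw [hset] at this
      simp only [Finset.mem_insert, Finset.mem_singleton] at this
      rcases this with rfl | rfl <;> assumption
    · exact bil_dead hA hz hu.2.1 hbil.le c hcu
  refine four (u + z) (add_zeros hA hu hz hbil) (by rw [mulVec_add, hAu, hAz, add_zero]) ?_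
  have hsub : (suppF (u + z))ᶜ ⊆ (suppF u)ᶜ := by
    intro c hc
    simp only [Finset.mem_compl, mem_suppF, not_not, Pi.add_apply] at *
    have := hu.2.1 c
    have := hz.2.1 c
    linarith
  have hss : (suppF (u + z))ᶜ ⊂ (suppF u)ᶜ := by
    refine lt_of_le_of_ne hsub fun heq => ?_
    have hmem : ∀ c, c = k ∨ c = l → z c = 0 := by
      intro c hc
      have hcm : c ∈ (suppF u)ᶜ := by rw [hset]; simpa using hc
      have hcm' := heq ▸ hcm
      simp only [Finset.mem_compl, mem_suppF, not_not, Pi.add_apply] at hcm hcm'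
      linarith
    rcases hzz with h | h
    · exact h (hmem k (Or.inl rfl))
    · exact h (hmem l (Or.inr rfl))
  have := Finset.card_lt_card hss
  omega

/-- `T` is the support of a zero `u` of `A`, and `A u` vanishes exactly on `T`. -/
def IsZeroSupp (A : Matrix (Fin 5) (Fin 5) ℝ) (T : Finset (Fin 5)) : Prop :=
  ∃ u, IsZeroOf A u ∧ (∀ l, u l ≠ 0 ↔ l ∈ T) ∧ ∀ l, (A *ᵥ u) l = 0 ↔ l ∈ T

/-- When `A` is not positive semidefinite, `A u` vanishes at exactly three indices for every zero
`u`. It vanishes on the support of `u`, hence at three indices or more, and not everywhere by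
`nonneg_of_kernel`. If it were nonzero only at `m`, the form would be positive semidefinite on the
hyperplane `x m = 0`, which forces any two zeros that are nonzero at `m` to be orthogonal and then
proportional, against the existence of the zeros attached to the pairs containing `m`. -/
lemma card_dead (hA : Copositive A) (hdiag : ∀ i, A i i = 1)
    (hno : ∀ i j, i ≠ j → -1 < A i j)
    (hcov : ∀ i j, i ≠ j → ∃ u, IsZeroOf A u ∧ (A *ᵥ u) i = 0 ∧ (A *ᵥ u) j = 0 ∧
      (u i ≠ 0 ∨ u j ≠ 0))
    (hnpsd : ¬ ∀ y, 0 ≤ bil A y y) {u : Fin 5 → ℝ} (hu : IsZeroOf A u) :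
    (Finset.univ.filter fun k => (A *ᵥ u) k = 0).card = 3 := by
  have hsub : ∀ v, IsZeroOf A v → suppF v ⊆ Finset.univ.filter fun k => (A *ᵥ v) k = 0 :=
    fun v hv k hk => by simpa using zero_dead hA hv k (mem_suppF.1 hk)
  have hlt : ∀ v, IsZeroOf A v → ∃ i, (A *ᵥ v) i ≠ 0 := by
    intro v hv
    by_contra! h
    exact hnpsd (nonneg_of_kernel hA hdiag hno hcov hv (funext h))
  have h3 := (three_le_card hA hdiag hno hu).trans (Finset.card_le_card (hsub u hu))
  have hle4 : (Finset.univ.filter fun k => (A *ᵥ u) k = 0).card < 5 := by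
    obtain ⟨i, hi⟩ := hlt u hu
    have : (Finset.univ.filter fun k => (A *ᵥ u) k = 0) ⊂ Finset.univ :=
      Finset.filter_ssubset.2 ⟨i, Finset.mem_univ i, hi⟩
    simpa using Finset.card_lt_card this
  by_contra hne
  -- the remaining case: `A u` is nonzero at a single index `m`
  have h4 : (Finset.univ.filter fun k => ¬ (A *ᵥ u) k = 0).card = 1 := by
    have := Finset.card_filter_add_card_filter_not (s := (Finset.univ : Finset (Fin 5)))
      (fun k => (A *ᵥ u) k = 0)
    simp only [Finset.card_univ, Fintype.card_fin] at this
    omega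
  obtain ⟨m, hm⟩ := Finset.card_eq_one.1 h4
  have hum : ∀ k, (A *ᵥ u) k ≠ 0 ↔ k = m := by
    intro k
    have : k ∈ (Finset.univ.filter fun k => ¬ (A *ᵥ u) k = 0) ↔ k ∈ ({m} : Finset (Fin 5)) := by
      rw [hm]
    simpa using this
  have hone : ∀ k l, (A *ᵥ u) k = 0 → u k = 0 → (A *ᵥ u) l = 0 → u l = 0 → k = l := by
    intro k l hk1 hk2 hl1 hl2
    have hcard : ((Finset.univ.filter fun k => (A *ᵥ u) k = 0) \ suppF u).card ≤ 1 := by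
      have h1 := Finset.card_sdiff_add_card_eq_card (hsub u hu)
      have h2 := three_le_card hA hdiag hno hu
      omega
    exact Finset.card_le_one.1 hcard k (by simp [mem_suppF, hk1, hk2]) l
      (by simp [mem_suppF, hl1, hl2])
  -- a zero vanishing at `m` has an image that is nonzero at `m`
  have hzm : ∀ z, IsZeroOf A z → (A *ᵥ z) m = 0 → z m ≠ 0 := by
    intro z hz hzm0 hz0
    obtain ⟨i, hi⟩ := hlt z hz
    refine hi ?_
    by_cases him : i = m
    · rw [him]; exact hzm0
    · refine dead_of_supp_subset hA hdiag hu hz hone (fun k hk => ?_) (k := i) ?_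
      · rw [(hum k).1 hk]; exact hz0
      · by_contra h
        exact him ((hum i).1 h)
  -- two zeros that are positive at `m` are orthogonal for the form of `A`
  have horth : ∀ v w, IsZeroOf A v → IsZeroOf A w → v m ≠ 0 → w m ≠ 0 → bil A v w ≤ 0 := by
    intro v w hv hw hvm hwm
    have hvp : 0 < v m := lt_of_le_of_ne (hv.2.1 m) (Ne.symm hvm)
    have hwp : 0 < w m := lt_of_le_of_ne (hw.2.1 m) (Ne.symm hwm)
    have h := nonneg_of_dead_card hA hu (y := v + (-(v m / w m)) • w) hone (fun k hk => by
      rw [(hum k).1 hk]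
      simp only [Pi.add_apply, Pi.smul_apply, smul_eq_mul]
      field_simp
      ring)
    rw [bil_add_smul hA.1, bil_zero_eq hv, bil_zero_eq hw] at h
    have hq : 0 < v m / w m := div_pos hvp hwp
    nlinarith
  obtain ⟨i₀, hi₀⟩ := exists_ne m
  obtain ⟨w, hw, -, hwm0, -⟩ := hcov i₀ m hi₀
  have hwm := hzm w hw hwm0
  obtain ⟨i, hi⟩ := hlt w hw
  have him : i ≠ m := by rintro rfl; exact hi hwm0
  obtain ⟨v, hv, hvi, hvm0, -⟩ := hcov i m him
  have hvm := hzm v hv hvm0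
  have hvw := horth v w hv hw hvm hwm
  have hwv : bil A w v ≤ 0 := by rw [bil_comm hA.1]; exact hvw
  have hvw0 : bil A v w = 0 := le_antisymm hvw (by
    rw [bil_eq_sum]
    exact Finset.sum_nonneg fun k _ => mul_nonneg (hv.2.1 k) (zero_mulVec_nonneg hA hw k))
  have hvsub : ∀ k, v k ≠ 0 → (A *ᵥ w) k = 0 := bil_dead hA hw hv.2.1 hvw
  -- subtracting a multiple of `v` from `w` leaves nothing, as a zero would have too small a support
  obtain ⟨t, k, hk, hnn, hk0⟩ := exists_sub_smul hv.2.1 hv.1 hw.2.1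
  have hwvk : ∀ k, w k ≠ 0 → (A *ᵥ v) k = 0 := bil_dead hA hv hw.2.1 hwv
  have hdiff : w + (-t) • v = 0 := by
    by_contra hne0
    have hz : IsZeroOf A (w + (-t) • v) := by
      refine ⟨hne0, hnn, ?_⟩
      change bil A _ _ = 0
      rw [bil_add_smul hA.1, bil_zero_eq hv, bil_zero_eq hw, bil_comm hA.1, hvw0]
      ring
    have h3' := three_le_card hA hdiag hno hz
    -- its support avoids `k`, `i` and an index where `A v` does not vanish
    obtain ⟨j, hj⟩ := hlt v hv
    have hki : k ≠ i := by rintro rfl; exact hi (hvsub k hk)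
    have hji : j ≠ i := by rintro rfl; exact hj hvi
    have hkj : k ≠ j := by rintro rfl; exact hj (zero_dead hA hv k hk)
    have hwi : w i = 0 := by by_contra h; exact hi (zero_dead hA hw i h)
    have hvi0 : v i = 0 := by by_contra h; exact hi (hvsub i h)
    have hwj : w j = 0 := by by_contra h; exact hj (hwvk j h)
    have hvj : v j = 0 := by by_contra h; exact hj (zero_dead hA hv j h)
    have hdisj : Disjoint (suppF (w + (-t) • v)) {k, i, j} := by
      rw [Finset.disjoint_right]
      intro c hc
      simp only [Finset.mem_insert, Finset.mem_singleton] at hc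
      rw [mem_suppF, not_not]
      rcases hc with rfl | rfl | rfl
      · exact hk0
      · simp [hwi, hvi0]
      · simp [hwj, hvj]
    have hcard3 : ({k, i, j} : Finset (Fin 5)).card = 3 := by
      rw [Finset.card_eq_three]
      exact ⟨k, i, j, hki, hkj, hji.symm, rfl⟩
    have := Finset.card_union_of_disjoint hdisj
    have h5 := Finset.card_le_univ (suppF (w + (-t) • v) ∪ {k, i, j})
    simp only [Fintype.card_fin] at h5
    omega
  have hwt : w = t • v := by
    ext c
    have := congrFun hdiff c
    simp only [Pi.add_apply, Pi.smul_apply, smul_eq_mul, Pi.zero_apply] at *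
    linarith
  apply hi
  rw [hwt, mulVec_smul, Pi.smul_apply, hvi, smul_zero]

/-- When `A` is not positive semidefinite, every pair of indices lies in a triple that is a zero
support. -/
lemma exists_zeroSupp (hA : Copositive A) (hdiag : ∀ i, A i i = 1)
    (hno : ∀ i j, i ≠ j → -1 < A i j)
    (hcov : ∀ i j, i ≠ j → ∃ u, IsZeroOf A u ∧ (A *ᵥ u) i = 0 ∧ (A *ᵥ u) j = 0 ∧
      (u i ≠ 0 ∨ u j ≠ 0))
    (hnpsd : ¬ ∀ y, 0 ≤ bil A y y) {i j : Fin 5} (hij : i ≠ j) :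
    ∃ k, k ≠ i ∧ k ≠ j ∧ IsZeroSupp A {i, j, k} := by
  obtain ⟨u, hu, hui, huj, -⟩ := hcov i j hij
  have hc := card_dead hA hdiag hno hcov hnpsd hu
  set J := Finset.univ.filter fun k => (A *ᵥ u) k = 0 with hJ
  have hsub : suppF u ⊆ J := fun k hk => by
    simpa [hJ] using zero_dead hA hu k (mem_suppF.1 hk)
  have hIJ : suppF u = J :=
    Finset.eq_of_subset_of_card_le hsub (by rw [hc]; exact three_le_card hA hdiag hno hu)
  have hiJ : i ∈ J := by simpa [hJ] using hui
  have hjJ : j ∈ J.erase i := Finset.mem_erase.2 ⟨hij.symm, by simpa [hJ] using huj⟩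
  have h1 : ((J.erase i).erase j).card = 1 := by
    rw [Finset.card_erase_of_mem hjJ, Finset.card_erase_of_mem hiJ, hc]
  obtain ⟨k, hk⟩ := Finset.card_eq_one.1 h1
  have hkm : k ∈ (J.erase i).erase j := by rw [hk]; simp
  simp only [Finset.mem_erase] at hkm
  have hJe : J = {i, j, k} := by
    rw [← Finset.insert_erase hiJ, ← Finset.insert_erase hjJ, hk]
  refine ⟨k, hkm.2.1, hkm.1, u, hu, fun l => ?_, fun l => ?_⟩
  · rw [← hJe, ← hIJ, mem_suppF]
  · rw [← hJe, hJ]; simp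

/-- Three zero supports cannot share two indices `a`, `b`: subtracting from `x` the combination of
the three zeros with coefficients `x c`, `x d`, `x e` leaves a vector supported on `{a, b}` and
orthogonal to the zeros, so the form of `A` at `x` is at least twice `x c * x d` times a positive
constant, against irreducibility with respect to `E_{cd}`. -/
lemma no_book (hA : Copositive A) (hirr : ∀ i j : Fin 5, i ≠ j → IrreducibleWrtMat A (Eij i j))
    {a b c d e : Fin 5} (hnd : [a, b, c, d, e].Nodup)
    (h1 : IsZeroSupp A {a, b, c}) (h2 : IsZeroSupp A {a, b, d}) (h3 : IsZeroSupp A {a, b, e}) :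
    False := by
  simp only [List.nodup_cons, List.mem_cons, List.not_mem_nil, or_false, not_or, List.nodup_nil,
    not_false_eq_true, and_true] at hnd
  obtain ⟨⟨hab, hac, had, hae⟩, ⟨hbc, hbd, hbe⟩, ⟨hcd, hce⟩, hde⟩ := hnd
  have huniv : ∀ l : Fin 5, l = a ∨ l = b ∨ l = c ∨ l = d ∨ l = e := by
    have : ({a, b, c, d, e} : Finset (Fin 5)) = Finset.univ := by
      apply Finset.eq_univ_of_card
      rw [Finset.card_insert_of_notMem (by simp [*]), Finset.card_insert_of_notMem (by simp [*]),
        Finset.card_insert_of_notMem (by simp [*]), Finset.card_insert_of_notMem (by simp [*])]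
      simp
    intro l
    have := this ▸ Finset.mem_univ l
    simpa using this
  -- zeros normalised at their third index
  have norm : ∀ f : Fin 5, IsZeroSupp A {a, b, f} → ∃ u, IsZeroOf A u ∧
      (∀ l, u l ≠ 0 ↔ l ∈ ({a, b, f} : Finset (Fin 5))) ∧
      (∀ l, (A *ᵥ u) l = 0 ↔ l ∈ ({a, b, f} : Finset (Fin 5))) ∧ u f = 1 := by
    rintro f ⟨u, hu, hs, hd⟩
    have hf : u f ≠ 0 := (hs f).2 (by simp)
    have hfp : 0 < u f := lt_of_le_of_ne (hu.2.1 f) (Ne.symm hf)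
    refine ⟨(u f)⁻¹ • u, ⟨?_, fun i => mul_nonneg (inv_nonneg.2 hfp.le) (hu.2.1 i), ?_⟩,
      fun l => ?_, fun l => ?_, ?_⟩
    · exact smul_ne_zero (inv_ne_zero hf) hu.1
    · rw [mulVec_smul, smul_dotProduct, dotProduct_smul, hu.2.2, smul_zero, smul_zero]
    · rw [← hs l]; simp [hf]
    · rw [← hd l]; simp [mulVec_smul, hf]
    · simp [hf]
  obtain ⟨u, hu, hus, hud, huc⟩ := norm c h1
  obtain ⟨v, hv, hvs, hvd, hvd1⟩ := norm d h2
  obtain ⟨w, hw, hws, hwd, hwe⟩ := norm e h3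
  have nn : ∀ p q : Fin 5 → ℝ, IsZeroOf A p → IsZeroOf A q → 0 ≤ bil A p q := fun p q hp hq => by
    rw [bil_eq_sum]
    exact Finset.sum_nonneg fun k _ => mul_nonneg (hp.2.1 k) (zero_mulVec_nonneg hA hq k)
  have huv : 0 < bil A u v := by
    refine lt_of_le_of_ne (nn u v hu hv) fun h0 => ?_
    have := bil_dead hA hv hu.2.1 h0.symm.le c (by rw [huc]; exact one_ne_zero)
    rw [hvd c] at this
    simp [Ne.symm hac, Ne.symm hbc, hcd] at this
  have huw := nn u w hu hw
  have hvw := nn v w hv hw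
  refine hirr c d hcd ⟨bil A u v, huv, ?_, fun x hx => ?_⟩
  · rw [Matrix.IsSymm, transpose_sub, transpose_smul, hA.1.eq, (Eij_symm c d).eq]
  · change 0 ≤ bil _ x x
    rw [bil_sub_smul_mat, bil_Eij hcd]
    obtain ⟨r, hr⟩ : ∃ r : Fin 5 → ℝ, r = x + (-1 : ℝ) • (x c • u + x d • v + x e • w) := ⟨_, rfl⟩
    have hx' : x = r + (1 : ℝ) • (x c • u + x d • v + x e • w) := by rw [hr]; module
    have z : ∀ {s : Fin 5 → ℝ} {f l : Fin 5}, (∀ l, s l ≠ 0 ↔ l ∈ ({a, b, f} : Finset (Fin 5))) →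
        l ∉ ({a, b, f} : Finset (Fin 5)) → s l = 0 := fun h hl => by
      by_contra h0
      exact hl ((h _).1 h0)
    have hrs : ∀ l, l ≠ a → l ≠ b → r l = 0 := by
      intro l hla hlb
      rw [hr]
      rcases huniv l with rfl | rfl | rfl | rfl | rfl
      · exact absurd rfl hla
      · exact absurd rfl hlb
      · simp [huc, z hvs (l := l) (by simp [*]), z hws (l := l) (by simp [*])]
      · simp [hvd1, z hus (l := l) (by simp [*, Ne.symm hcd]), z hws (l := l) (by simp [*])]
      · simp [hwe, z hus (l := l) (by simp [*, Ne.symm hce]),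
          z hvs (l := l) (by simp [*, Ne.symm hde])]
    have hr0 : ∀ (s : Fin 5 → ℝ) (f : Fin 5),
        (∀ l, (A *ᵥ s) l = 0 ↔ l ∈ ({a, b, f} : Finset (Fin 5))) → bil A r s = 0 := by
      intro s f hs
      rw [bil_eq_sum]
      refine Finset.sum_eq_zero fun l _ => ?_
      by_cases hla : l = a
      · rw [(hs l).2 (by simp [hla]), mul_zero]
      · by_cases hlb : l = b
        · rw [(hs l).2 (by simp [hlb]), mul_zero]
        · rw [hrs l hla hlb, zero_mul]
    have hrr : 0 ≤ bil A r r := by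
      refine nonneg_of_dead_card hA hu (fun k l hk hk' _ _ => ?_) fun l hl => ?_
      · exact absurd hk' ((hus k).2 ((hud k).1 hk))
      · refine hrs l ?_ ?_ <;> rintro rfl <;> exact hl ((hud l).2 (by simp))
    have hq : bil A x x = bil A r r + 2 * (x c * x d * bil A u v + x c * x e * bil A u w +
        x d * x e * bil A v w) := by
      have e1 : bil A r (x c • u + x d • v + x e • w) =
          x c * bil A r u + x d * bil A r v + x e * bil A r w := by
        simp [bil, mulVec_add, mulVec_smul]
      have e2 : bil A (x c • u + x d • v + x e • w) (x c • u + x d • v + x e • w) =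
          x c ^ 2 * bil A u u + x d ^ 2 * bil A v v + x e ^ 2 * bil A w w +
          x c * x d * (bil A u v + bil A v u) + x c * x e * (bil A u w + bil A w u)
          + x d * x e * (bil A v w + bil A w v) := by
        simp only [bil, mulVec_add, mulVec_smul, dotProduct_add, add_dotProduct, smul_dotProduct,
          dotProduct_smul, smul_eq_mul]
        ring
      conv_lhs => rw [hx']
      rw [bil_add_smul hA.1, e1, e2, hr0 u c hud, hr0 v d hvd, hr0 w e hwd, bil_zero_eq hu,
        bil_zero_eq hv, bil_zero_eq hw, bil_comm hA.1 v u, bil_comm hA.1 w u, bil_comm hA.1 w v]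
      ring
    rw [hq]
    have := mul_nonneg (mul_nonneg (hx c) (hx e)) huw
    have := mul_nonneg (mul_nonneg (hx d) (hx e)) hvw
    nlinarith

end Five

/-! ### The positive semidefinite case -/

open scoped MatrixOrder in
/-- If `A` is positive semidefinite it is the Gram matrix of unit vectors with angles
`π - α i j * π`, and averaging the number of pairs separated by a hyperplane gives
`∑ (1 - α i j) ≤ 6`. -/
lemma posSemidef_case {A : Matrix (Fin 5) (Fin 5) ℝ} (hA : A.IsSymm) (hpsd : ∀ y, 0 ≤ bil A y y)
    (hdiag : ∀ i, A i i = 1) {α : Fin 5 → Fin 5 → ℝ}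
    (hα : ∀ i j, α i j ∈ Set.Icc (0 : ℝ) 1)
    (hAα : ∀ i j, A i j = -Real.cos (α i j * Real.pi)) :
    4 ≤ ∑ i : Fin 5, ∑ j ∈ Finset.univ.filter (fun j => i < j), α i j := by
  have hP : A.PosSemidef := by
    refine Matrix.PosSemidef.of_dotProduct_mulVec_nonneg ?_ fun x => by simpa [bil] using hpsd x
    rw [Matrix.IsHermitian, conjTranspose_eq_transpose_of_trivial]
    exact hA
  obtain ⟨B, hB⟩ := CStarAlgebra.nonneg_iff_eq_star_mul_self.1 hP.nonneg
  let a : Fin 5 → EuclideanSpace ℝ (Fin 5) := fun i => WithLp.toLp 2 fun k => B k i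
  have hin : ∀ i j, inner ℝ (a i) (a j) = A i j := by
    intro i j
    rw [hB]
    simp [a, PiLp.inner_apply, Matrix.mul_apply, mul_comm, star_eq_conjTranspose]
  have hnorm : ∀ i, ‖a i‖ = 1 := by
    intro i
    have := real_inner_self_eq_norm_sq (a i)
    rw [hin, hdiag] at this
    have h0 := norm_nonneg (a i)
    nlinarith
  have hpi := Real.pi_pos
  have hsep : ∀ i j, sepVol (a i) (a j) = (1 - α i j) * ballVol := by
    intro i j
    have hang : InnerProductGeometry.angle (a i) (a j) = (1 - α i j) * Real.pi := by
      rw [InnerProductGeometry.angle, hin, hnorm, hnorm, hAα, mul_one, div_one,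
        ← Real.cos_pi_sub, show Real.pi - α i j * Real.pi = (1 - α i j) * Real.pi by ring]
      obtain ⟨h0, h1⟩ := hα i j
      exact Real.arccos_cos (by nlinarith) (by nlinarith)
    rw [sepVol_eq (hnorm i) (hnorm j), hang]
    field_simp
  have h := sum_sepVol_le a
  simp only [hsep, ← Finset.sum_mul] at h
  have h6 := le_of_mul_le_mul_right h ballVol_pos
  simp only [Finset.sum_sub_distrib] at h6
  have h10 : ∑ i : Fin 5, ∑ j ∈ Finset.univ.filter (fun j => i < j), (1 : ℝ) = 10 := by
    simp only [Finset.sum_const, nsmul_eq_mul, mul_one]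
    norm_cast
  linarith

/-! ### Pentagons of triples, and the case of an entry equal to minus one -/

lemma univ_of_nodup {a b c d e : Fin 5} (hnd : [a, b, c, d, e].Nodup) (l : Fin 5) :
    l = a ∨ l = b ∨ l = c ∨ l = d ∨ l = e := by
  have h : [a, b, c, d, e].toFinset = Finset.univ := by
    apply Finset.eq_univ_of_card
    rw [List.toFinset_card_of_nodup hnd]
    simp
  have := h ▸ Finset.mem_univ l
  simpa using this

/-- A family `P` of triples of five points such that every pair lies in one or two of them contains
the five triples of consecutive vertices of a pentagon. The complements of the triples form a graph
in which any three vertices span one or two edges, and the only such graph is the 5-cycle. -/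
lemma exists_pentagon {P : Finset (Fin 5) → Prop}
    (hcov : ∀ i j, i ≠ j → ∃ k, k ≠ i ∧ k ≠ j ∧ P {i, j, k})
    (hbook : ∀ a b c d e, [a, b, c, d, e].Nodup → P {a, b, c} → P {a, b, d} → P {a, b, e} → False) :
    ∃ a b c d e, [a, b, c, d, e].Nodup ∧ P {a, b, c} ∧ P {b, c, d} ∧ P {c, d, e} ∧ P {d, e, a} ∧
      P {e, a, b} := by
  have hcov' : ∀ a b c d e, [a, b, c, d, e].Nodup → P {a, b, c} ∨ P {a, b, d} ∨ P {a, b, e} := by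
    intro a b c d e hnd
    obtain ⟨k, hka, hkb, hk⟩ := hcov a b (by
      simp only [List.nodup_cons, List.mem_cons, not_or] at hnd
      exact hnd.1.1)
    rcases univ_of_nodup hnd k with rfl | rfl | rfl | rfl | rfl <;> simp_all
  by_contra! hcon
  have c01 := hcov' 0 1 2 3 4 (by decide)
  have c02 := hcov' 0 2 1 3 4 (by decide)
  have c03 := hcov' 0 3 1 2 4 (by decide)
  have c04 := hcov' 0 4 1 2 3 (by decide)
  have c12 := hcov' 1 2 0 3 4 (by decide)
  have c13 := hcov' 1 3 0 2 4 (by decide)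
  have c14 := hcov' 1 4 0 2 3 (by decide)
  have c23 := hcov' 2 3 0 1 4 (by decide)
  have c24 := hcov' 2 4 0 1 3 (by decide)
  have c34 := hcov' 3 4 0 1 2 (by decide)
  have b01 := hbook 0 1 2 3 4 (by decide)
  have b02 := hbook 0 2 1 3 4 (by decide)
  have b03 := hbook 0 3 1 2 4 (by decide)
  have b04 := hbook 0 4 1 2 3 (by decide)
  have b12 := hbook 1 2 0 3 4 (by decide)
  have b13 := hbook 1 3 0 2 4 (by decide)
  have b14 := hbook 1 4 0 2 3 (by decide)
  have b23 := hbook 2 3 0 1 4 (by decide)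
  have b24 := hbook 2 4 0 1 3 (by decide)
  have b34 := hbook 3 4 0 1 2 (by decide)
  have p1 := hcon 0 1 2 3 4 (by decide)
  have p2 := hcon 0 1 2 4 3 (by decide)
  have p3 := hcon 0 1 3 2 4 (by decide)
  have p4 := hcon 0 1 3 4 2 (by decide)
  have p5 := hcon 0 1 4 2 3 (by decide)
  have p6 := hcon 0 1 4 3 2 (by decide)
  have p7 := hcon 0 2 1 3 4 (by decide)
  have p8 := hcon 0 2 1 4 3 (by decide)
  have p9 := hcon 0 2 3 1 4 (by decide)
  have p10 := hcon 0 2 4 1 3 (by decide)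
  have p11 := hcon 0 3 1 2 4 (by decide)
  have p12 := hcon 0 3 2 1 4 (by decide)
  clear hcov hcov' hbook hcon
  obtain ⟨Q, hQ⟩ : ∃ Q : Fin 5 → Fin 5 → Fin 5 → Prop, ∀ x y z, P {x, y, z} = Q x y z :=
    ⟨_, fun _ _ _ => rfl⟩
  have s1 : ∀ x y z, Q x y z = Q y x z := fun x y z => by rw [← hQ, ← hQ, Finset.insert_comm]
  have s2 : ∀ x y z, Q x y z = Q x z y := fun x y z => by rw [← hQ, ← hQ, Finset.pair_comm]
  -- sort the indices of each triple
  simp only [hQ] at *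
  simp only [s1 1 0, s1 2 0, s1 2 1, s1 3 0, s1 3 1, s1 3 2, s1 4 0, s1 4 1, s1 4 2, s1 4 3,
    s2 _ 2 0, s2 _ 2 1, s2 _ 3 0, s2 _ 3 1, s2 _ 3 2, s2 _ 4 0, s2 _ 4 1, s2 _ 4 2,
    s2 _ 4 3]
    at c02 c03 c04 c12 c13 c14 c23 c24 c34 b02 b03 b04 b12 b13 b14 b23 b24 b34
      p1 p2 p3 p4 p5 p6 p7 p8 p9 p10 p11 p12
  clear s1 s2 hQ
  grind

lemma sum_lt_of_nodup {a b c d e : Fin 5} (hnd : [a, b, c, d, e].Nodup) {f : Fin 5 → Fin 5 → ℝ}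
    (hf : ∀ i j, f i j = f j i) :
    ∑ i, ∑ j ∈ Finset.univ.filter (fun j => i < j), f i j =
      f a b + f a c + f a d + f a e + f b c + f b d + f b e + f c d + f c e + f d e := by
  have hsum : ∀ g : Fin 5 → ℝ, ∑ i, g i = g a + g b + g c + g d + g e := by
    intro g
    have h : [a, b, c, d, e].toFinset = Finset.univ := by
      ext l
      simpa using univ_of_nodup hnd l
    rw [← h, List.sum_toFinset _ hnd]
    simp [add_assoc]
  have h2 : 2 * ∑ i, ∑ j ∈ Finset.univ.filter (fun j => i < j), f i j + ∑ i, f i i =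
      ∑ i, ∑ j, f i j := by
    simp only [Finset.sum_filter, Fin.sum_univ_five, hf 1 0, hf 2 0, hf 3 0, hf 4 0, hf 2 1, hf 3 1,
      hf 4 1, hf 3 2, hf 4 2, hf 4 3]
    simp
    ring
  generalize ∑ i, ∑ j ∈ Finset.univ.filter (fun j => i < j), f i j = S at *
  simp only [hsum, hf b a, hf c a, hf d a,
    hf e a, hf c b, hf d b, hf e b, hf d c, hf e c, hf e d] at h2
  linarith

lemma bil_three {n : ℕ} {A : Matrix (Fin n) (Fin n) ℝ} (hA : A.IsSymm) (a b c : Fin n)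
    (p q r : ℝ) :
    bil A (p • Pi.single a 1 + q • Pi.single b 1 + r • Pi.single c 1)
      (p • Pi.single a 1 + q • Pi.single b 1 + r • Pi.single c 1) =
    p ^ 2 * A a a + q ^ 2 * A b b + r ^ 2 * A c c +
      2 * (p * q * A a b + p * r * A a c + q * r * A b c) := by
  rw [bil_add_smul hA, bil_add_smul hA]
  simp only [bil_single_right hA, mulVec_add, mulVec_smul, Pi.add_apply,
    Pi.smul_apply, mulVec_single_one, col_apply, smul_eq_mul, hA.apply a b, hA.apply a c,
    hA.apply b c]
  have := bil_add_smul hA (0 : Fin n → ℝ) (Pi.single a 1) p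
  simp only [zero_add, bil_single_single] at this
  rw [this]
  simp [bil, hA.apply b a]
  ring

/-- If `A i j = -1` then `e_i + e_j` is a zero, and the first-order condition at `k` bounds the
angles. -/
lemma pi_le_of_neg_one {n : ℕ} {A : Matrix (Fin n) (Fin n) ℝ} (hA : Copositive A)
    (hdiag : ∀ i, A i i = 1) {θ : Fin n → Fin n → ℝ} (hθ : ∀ i j, θ i j ∈ Set.Icc 0 Real.pi)
    (hAθ : ∀ i j, A i j = -Real.cos (θ i j)) {i j : Fin n} (hij : i ≠ j) (h : A i j = -1)
    (k : Fin n) : Real.pi ≤ θ i k + θ j k := by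
  have hz : IsZeroOf A ((1 : ℝ) • Pi.single i 1 + (1 : ℝ) • Pi.single j 1 +
      (0 : ℝ) • Pi.single k 1) := by
    refine ⟨fun h0 => ?_, fun l => ?_, ?_⟩
    · have := congrFun h0 i
      simp [hij] at this
    · simp only [one_smul, zero_smul, Pi.add_apply, Pi.single_apply]
      split_ifs <;> norm_num
    · change bil A _ _ = 0
      rw [bil_three hA.1, hdiag, hdiag, h]
      ring
  have h1 := zero_mulVec_nonneg hA hz k
  simp only [one_smul, zero_smul, add_zero, mulVec_add, mulVec_single_one, Pi.add_apply, col_apply,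
    hA.1.apply i k, hA.1.apply j k, hAθ] at h1
  have hi := hθ i k
  have hj := hθ j k
  have : Real.cos (θ i k) ≤ Real.cos (Real.pi - θ j k) := by
    rw [Real.cos_pi_sub]; linarith
  have := (Real.strictAntiOn_cos.le_iff_ge hi ⟨by linarith [hj.2], by linarith [hj.1]⟩).1 this
  linarith

/-- The three angles of a principal 3×3 block have sum at least `π`. If not, increasing `θ a b`
until the sum is `π` produces a form with a positive zero, at which the form of `A` is negative. -/
lemma pi_le_triple {n : ℕ} {A : Matrix (Fin n) (Fin n) ℝ} (hA : Copositive A)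
    (hdiag : ∀ i, A i i = 1) {θ : Fin n → Fin n → ℝ} (hθ : ∀ i j, θ i j ∈ Set.Icc 0 Real.pi)
    (hAθ : ∀ i j, A i j = -Real.cos (θ i j)) (hsymm : ∀ i j, θ i j = θ j i)
    {a b c : Fin n} (hac : a ≠ c) (hbc : b ≠ c) : Real.pi ≤ θ a b + θ a c + θ b c := by
  by_contra! hlt
  have hab0 := (hθ a b).1
  have hac0 := (hθ a c).1
  have hbc0 := (hθ b c).1
  have hy : 0 < θ a c := by
    refine lt_of_le_of_ne hac0 fun h0 => ?_
    have := pi_le_of_neg_one hA hdiag hθ hAθ hac (by rw [hAθ, ← h0, Real.cos_zero]) b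
    rw [hsymm c b] at this
    linarith
  have hz : 0 < θ b c := by
    refine lt_of_le_of_ne hbc0 fun h0 => ?_
    have := pi_le_of_neg_one hA hdiag hθ hAθ hbc (by rw [hAθ, ← h0, Real.cos_zero]) a
    rw [hsymm c a, hsymm b a] at this
    linarith
  have hsy := Real.sin_pos_of_pos_of_lt_pi hy (by linarith)
  have hsz := Real.sin_pos_of_pos_of_lt_pi hz (by linarith)
  have hsx : 0 < Real.sin (θ a c + θ b c) := Real.sin_pos_of_pos_of_lt_pi (by linarith) (by linarith)
  have h := hA.2 (Real.sin (θ b c) • Pi.single a 1 + Real.sin (θ a c) • Pi.single b 1 +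
    Real.sin (θ a c + θ b c) • Pi.single c 1) fun l => by
      simp only [Pi.add_apply, Pi.smul_apply, Pi.single_apply, smul_eq_mul]
      split_ifs <;> simp <;> positivity
  change 0 ≤ bil A _ _ at h
  rw [bil_three hA.1, hdiag, hdiag, hdiag, hAθ, hAθ, hAθ] at h
  have hcos : Real.cos (Real.pi - (θ a c + θ b c)) < Real.cos (θ a b) :=
    Real.cos_lt_cos_of_nonneg_of_le_pi hab0 (by linarith) (by linarith)
  rw [Real.cos_pi_sub, Real.cos_add] at hcos
  rw [Real.sin_add] at h
  have e1 := Real.sin_sq_add_cos_sq (θ a c)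
  have e2 := Real.sin_sq_add_cos_sq (θ b c)
  have := mul_lt_mul_of_pos_left hcos (mul_pos hsz hsy)
  generalize Real.sin (θ a c) = s at *
  generalize Real.cos (θ a c) = u at *
  generalize Real.sin (θ b c) = t at *
  generalize Real.cos (θ b c) = v at *
  nlinarith [congrArg (fun x => x * t ^ 2) e1, congrArg (fun x => x * s ^ 2) e2]

lemma exists_nodup {a b : Fin 5} (hab : a ≠ b) : ∃ c d e, [a, b, c, d, e].Nodup := by
  revert a b
  decide

/-- The pairs joining `{i, j}` to the other three indices contribute at least `3 π`, and the triple
of the other three indices at least `π`. -/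
lemma neg_one_case {A : Matrix (Fin 5) (Fin 5) ℝ} (hA : Copositive A)
    (hdiag : ∀ i, A i i = 1) {θ : Fin 5 → Fin 5 → ℝ} (hθ : ∀ i j, θ i j ∈ Set.Icc 0 Real.pi)
    (hAθ : ∀ i j, A i j = -Real.cos (θ i j)) (hsymm : ∀ i j, θ i j = θ j i) {i j : Fin 5}
    (hij : i ≠ j) (h : A i j = -1) :
    4 * Real.pi ≤ ∑ i, ∑ j ∈ Finset.univ.filter (fun j => i < j), θ i j := by
  obtain ⟨c, d, e, hnd⟩ := exists_nodup hij
  rw [sum_lt_of_nodup hnd hsymm]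
  have hk := pi_le_of_neg_one hA hdiag hθ hAθ hij h
  have ht : Real.pi ≤ θ c d + θ c e + θ d e := by
    simp only [List.nodup_cons, List.mem_cons, List.not_mem_nil, or_false, not_or] at hnd
    exact pi_le_triple hA hdiag hθ hAθ hsymm hnd.2.2.1.2 hnd.2.2.2.1
  linarith [hk c, hk d, hk e, (hθ i j).1]

/-! ### The trigonometry of the pentagon -/

/-- The relations of `triangle_angles` exclude flat angles. -/
lemma ne_pi_of_triangle {x y z p q r : ℝ} (hy : y ∈ Set.Ioc 0 Real.pi) (hz : z ∈ Set.Ioc 0 Real.pi)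
    (hp : 0 < p) (hq : 0 < q) (hr : 0 < r) (h1 : p = q * Real.cos x + r * Real.cos y)
    (h3 : r = p * Real.cos y + q * Real.cos z) : x ≠ Real.pi := by
  rintro rfl
  have hlt : ∀ w ∈ Set.Ioc 0 Real.pi, Real.cos w < 1 := fun w hw => by
    rw [← Real.cos_zero]
    exact Real.cos_lt_cos_of_nonneg_of_le_pi le_rfl hw.2 hw.1
  rw [Real.cos_pi] at h1
  -- `p + q = r * cos y < r` and `r = p * cos y + q * cos z < p + q`
  have := mul_lt_mul_of_pos_left (hlt y hy) hr
  have := mul_lt_mul_of_pos_left (hlt y hy) hp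
  have := mul_lt_mul_of_pos_left (hlt z hz) hq
  linarith

/-- The hypotheses say that `(p, q, r)` is a positive vector in the kernel of the matrix with
unit diagonal and off-diagonal entries `-cos x`, `-cos y`, `-cos z`. Then `p`, `q`, `r` are
the sides of a triangle with opposite angles `z`, `y`, `x`; the conclusion is the angle sum and the
law of sines. -/
lemma triangle_angles {x y z p q r : ℝ} (hx : x ∈ Set.Ioo 0 Real.pi) (hy : y ∈ Set.Ioo 0 Real.pi)
    (hz : z ∈ Set.Ioo 0 Real.pi) (hp : 0 < p) (hq : 0 < q) (hr : 0 < r)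
    (h1 : p = q * Real.cos x + r * Real.cos y) (h2 : q = p * Real.cos x + r * Real.cos z)
    (h3 : r = p * Real.cos y + q * Real.cos z) :
    x + y + z = Real.pi ∧ p * Real.sin x = r * Real.sin z ∧ q * Real.sin x = r * Real.sin y := by
  have sx := Real.sin_pos_of_mem_Ioo hx
  have sy := Real.sin_pos_of_mem_Ioo hy
  have sz := Real.sin_pos_of_mem_Ioo hz
  have ex := Real.sin_sq_add_cos_sq x
  have ey := Real.sin_sq_add_cos_sq y
  have ez := Real.sin_sq_add_cos_sq z
  -- the law of cosines `p ^ 2 + q ^ 2 - 2 * p * q * cos x = r ^ 2`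
  have hcos : p ^ 2 + q ^ 2 - 2 * p * q * Real.cos x = r ^ 2 := by
    linear_combination p * h1 + q * h2 - r * h3
  have hqr : q * Real.sin x = r * Real.sin y := by
    refine (pow_left_inj₀ (by positivity) (by positivity) two_ne_zero).1 ?_
    linear_combination hcos + q ^ 2 * ex - r ^ 2 * ey -
      (p - q * Real.cos x + r * Real.cos y) * h1
  have hpr : p * Real.sin x = r * Real.sin z := by
    refine (pow_left_inj₀ (by positivity) (by positivity) two_ne_zero).1 ?_
    linear_combination hcos + p ^ 2 * ex - r ^ 2 * ez -
      (q - p * Real.cos x + r * Real.cos z) * h2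
  have hsin : Real.sin z = Real.sin (x + y) := by
    rw [Real.sin_add]
    refine mul_left_cancel₀ hr.ne' ?_
    linear_combination Real.sin x * h1 - hpr + Real.cos x * hqr
  have hcz : Real.cos z = Real.cos (Real.pi - (x + y)) := by
    rw [Real.cos_pi_sub, Real.cos_add]
    refine mul_left_cancel₀ hr.ne' ?_
    linear_combination -h2 - Real.cos x * h1 - q * ex + Real.sin x * hqr
  have hlt : x + y < Real.pi := by
    by_contra! hge
    have := Real.sin_nonneg_of_nonneg_of_le_pi (x := x + y - Real.pi) (by linarith)
      (by linarith [hx.2, hy.2])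
    rw [Real.sin_sub_pi] at this
    linarith
  have := Real.injOn_cos ⟨hz.1.le, hz.2.le⟩ ⟨by linarith, by linarith [hx.1, hy.1]⟩ hcz
  exact ⟨by linarith, hpr, hqr⟩

section Pentagon

variable {A : Matrix (Fin 5) (Fin 5) ℝ} {θ : Fin 5 → Fin 5 → ℝ}

/-- A zero supported on `{a, b, c}` forces the angle sum to be `π`, and is proportional to
`(sin (θ b c), sin (θ a c), sin (θ a b))` by the law of sines. The second conclusion is the
first-order condition at `l`. -/
lemma angles_of_zeroSupp (hA : Copositive A) (hdiag : ∀ i, A i i = 1)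
    (hθ : ∀ i j, θ i j ∈ Set.Icc 0 Real.pi) (hAθ : ∀ i j, A i j = -Real.cos (θ i j))
    (hsymm : ∀ i j, θ i j = θ j i) (hno : ∀ i j, i ≠ j → -1 < A i j) {a b c : Fin 5}
    (hab : a ≠ b) (hac : a ≠ c) (hbc : b ≠ c) (h : IsZeroSupp A {a, b, c}) :
    (0 < θ a b ∧ 0 < θ b c ∧ θ a b + θ a c + θ b c = Real.pi) ∧
    ∀ l, Real.cos (θ l a) * Real.sin (θ b c) + Real.cos (θ l b) * Real.sin (θ a c) +
      Real.cos (θ l c) * Real.sin (θ a b) ≤ 0 := by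
  obtain ⟨u, hu, hus, hud⟩ := h
  have hmul : ∀ l, (A *ᵥ u) l = A l a * u a + A l b * u b + A l c * u c := by
    intro l
    rw [mulVec, dotProduct, ← Finset.sum_subset (Finset.subset_univ {a, b, c})]
    · rw [Finset.sum_insert (by simp [hab, hac]), Finset.sum_insert (by simp [hbc]),
        Finset.sum_singleton]
      ring
    · intro k _ hk
      rw [not_not.1 (mt (hus k).1 hk), mul_zero]
  have hpos : ∀ l ∈ ({a, b, c} : Finset (Fin 5)), 0 < u l := fun l hl =>
    lt_of_le_of_ne (hu.2.1 l) (Ne.symm ((hus l).2 hl))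
  have hp := hpos a (by simp)
  have hq := hpos b (by simp)
  have hr := hpos c (by simp)
  have e1 := (hud a).2 (by simp)
  have e2 := (hud b).2 (by simp)
  have e3 := (hud c).2 (by simp)
  rw [hmul, hdiag, hAθ, hAθ] at e1
  rw [hmul, hdiag, hAθ, hAθ, hsymm b a] at e2
  rw [hmul, hdiag, hAθ, hAθ, hsymm c a, hsymm c b] at e3
  have h0 : ∀ i j, i ≠ j → 0 < θ i j := fun i j hij => by
    refine lt_of_le_of_ne (hθ i j).1 fun h => ?_
    have := hno i j hij
    rw [hAθ, ← h, Real.cos_zero] at this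
    exact lt_irrefl _ this
  have hIoc : ∀ i j, i ≠ j → θ i j ∈ Set.Ioc 0 Real.pi := fun i j hij => ⟨h0 i j hij, (hθ i j).2⟩
  have hx := hIoc a b hab
  have hy := hIoc a c hac
  have hz := hIoc b c hbc
  have f1 : u a = u b * Real.cos (θ a b) + u c * Real.cos (θ a c) := by linarith
  have f2 : u b = u a * Real.cos (θ a b) + u c * Real.cos (θ b c) := by linarith
  have f3 : u c = u a * Real.cos (θ a c) + u b * Real.cos (θ b c) := by linarith
  have hx' := ne_pi_of_triangle hy hz hp hq hr f1 f3
  have hy' := ne_pi_of_triangle (x := θ a c) hx hz hp hr hq (by linarith) f2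
  have hz' := ne_pi_of_triangle (x := θ b c) hx hy hq hr hp (by linarith) f1
  obtain ⟨hs, hpr, hqr⟩ := triangle_angles ⟨hx.1, lt_of_le_of_ne hx.2 hx'⟩
    ⟨hy.1, lt_of_le_of_ne hy.2 hy'⟩ ⟨hz.1, lt_of_le_of_ne hz.2 hz'⟩ hp hq hr f1 f2 f3
  refine ⟨⟨hx.1, hz.1, hs⟩, fun l => ?_⟩
  have hl := zero_mulVec_nonneg hA hu l
  rw [hmul, hAθ, hAθ, hAθ] at hl
  have hsx := Real.sin_nonneg_of_nonneg_of_le_pi hx.1.le hx.2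
  refine nonpos_of_mul_nonpos_right (a := u c) ?_ hr
  have : u c * (Real.cos (θ l a) * Real.sin (θ b c) + Real.cos (θ l b) * Real.sin (θ a c) +
      Real.cos (θ l c) * Real.sin (θ a b)) = -((-Real.cos (θ l a) * u a + -Real.cos (θ l b) * u b +
      -Real.cos (θ l c) * u c) * Real.sin (θ a b)) := by
    linear_combination -Real.cos (θ l a) * hpr - Real.cos (θ l b) * hqr
  rw [this]
  exact neg_nonpos.2 (mul_nonneg hl hsx)

/-- In terms of the pentagon angles `t₁ = θ a b`, …, `t₅ = θ e a`, the first-order condition at `e`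
for the zero supported on `{a, b, c}` reads `cos (t₁ + t₂ + t₅) + cos (t₃ + t₄) ≥ 0`. -/
lemma pentagon_step (hA : Copositive A) (hdiag : ∀ i, A i i = 1)
    (hθ : ∀ i j, θ i j ∈ Set.Icc 0 Real.pi) (hAθ : ∀ i j, A i j = -Real.cos (θ i j))
    (hsymm : ∀ i j, θ i j = θ j i) (hno : ∀ i j, i ≠ j → -1 < A i j) {a b c d e : Fin 5}
    (hnd : [a, b, c, d, e].Nodup) (h1 : IsZeroSupp A {a, b, c}) (h2 : IsZeroSupp A {c, d, e})
    (h3 : IsZeroSupp A {e, a, b})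
    (hS : Real.pi < θ a b + θ b c + θ c d + θ d e + θ e a)
    (hS' : θ a b + θ b c + θ c d + θ d e + θ e a < 3 * Real.pi) :
    Real.pi ≤ θ a b + θ b c + θ c d + θ d e + θ e a - 2 * (θ c d + θ d e) := by
  simp only [List.nodup_cons, List.mem_cons, List.not_mem_nil, or_false, not_or, List.nodup_nil,
    not_false_eq_true, and_true] at hnd
  obtain ⟨⟨hab, hac, had, hae⟩, ⟨hbc, hbd, hbe⟩, ⟨hcd, hce⟩, hde⟩ := hnd
  obtain ⟨⟨p1, p2, s1⟩, hl⟩ := angles_of_zeroSupp hA hdiag hθ hAθ hsymm hno hab hac hbc h1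
  obtain ⟨⟨p3, p4, s2⟩, -⟩ := angles_of_zeroSupp hA hdiag hθ hAθ hsymm hno hcd hce hde h2
  obtain ⟨⟨p5, -, s3⟩, -⟩ :=
    angles_of_zeroSupp hA hdiag hθ hAθ hsymm hno (Ne.symm hae) (Ne.symm hbe) hab h3
  have he := hl e
  have hce0 := (hθ c e).1
  rw [show θ e b = Real.pi - (θ e a + θ a b) by linarith, Real.cos_pi_sub,
    show θ e c = Real.pi - (θ c d + θ d e) by rw [hsymm e c]; linarith, Real.cos_pi_sub,
    show θ a c = Real.pi - (θ a b + θ b c) by linarith, Real.sin_pi_sub] at he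
  have hsin : 0 < Real.sin (θ a b) :=
    Real.sin_pos_of_pos_of_lt_pi p1 (by linarith [(hθ a c).1])
  generalize θ a b = t1 at *
  generalize θ b c = t2 at *
  generalize θ c d = t3 at *
  generalize θ d e = t4 at *
  generalize θ e a = t5 at *
  have hprod : 0 ≤ Real.sin t1 * (Real.cos (t1 + t2 + t5) + Real.cos (t3 + t4)) := by
    have : Real.cos t5 * Real.sin t2 - Real.cos (t5 + t1) * Real.sin (t1 + t2) =
        -(Real.sin t1 * Real.cos (t1 + t2 + t5)) := by
      simp only [Real.cos_add, Real.sin_add]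
      linear_combination (-Real.cos t5 * Real.sin t2) * Real.sin_sq_add_cos_sq t1
    linarith
  have hsum := nonneg_of_mul_nonneg_right hprod hsin
  rw [Real.cos_add_cos] at hsum
  by_contra! hlt
  have hc1 : Real.cos ((t1 + t2 + t5 + (t3 + t4)) / 2) < 0 :=
    Real.cos_neg_of_pi_div_two_lt_of_lt (by linarith) (by linarith)
  have hc2 : 0 < Real.cos ((t1 + t2 + t5 - (t3 + t4)) / 2) :=
    Real.cos_pos_of_mem_Ioo ⟨by linarith, by linarith⟩
  nlinarith [mul_neg_of_neg_of_pos hc1 hc2]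

/-- The angle sums of the five triples add up to `5 π` and count the edges of the pentagon twice,
so the claim is that the sum `S` of the edge angles is at most `π`. Otherwise adding the five
inequalities of `pentagon_step` gives `5 π ≤ 5 S - 4 S = S`, while `S < 3 π`. -/
lemma pentagon_case (hA : Copositive A) (hdiag : ∀ i, A i i = 1)
    (hθ : ∀ i j, θ i j ∈ Set.Icc 0 Real.pi) (hAθ : ∀ i j, A i j = -Real.cos (θ i j))
    (hsymm : ∀ i j, θ i j = θ j i) (hno : ∀ i j, i ≠ j → -1 < A i j) {a b c d e : Fin 5}
    (hnd : [a, b, c, d, e].Nodup) (h1 : IsZeroSupp A {a, b, c}) (h2 : IsZeroSupp A {b, c, d})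
    (h3 : IsZeroSupp A {c, d, e}) (h4 : IsZeroSupp A {d, e, a}) (h5 : IsZeroSupp A {e, a, b}) :
    4 * Real.pi ≤ ∑ i, ∑ j ∈ Finset.univ.filter (fun j => i < j), θ i j := by
  have hrot : ∀ {a b c d e : Fin 5}, [a, b, c, d, e].Nodup → [b, c, d, e, a].Nodup := fun h => by
    simpa using List.nodup_rotate (n := 1) |>.2 h
  have hang : ∀ {a b c d e : Fin 5}, [a, b, c, d, e].Nodup → IsZeroSupp A {a, b, c} →
      θ a b + θ a c + θ b c = Real.pi := by
    intro a b c d e hnd h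
    simp only [List.nodup_cons, List.mem_cons, List.not_mem_nil, or_false, not_or] at hnd
    exact (angles_of_zeroSupp hA hdiag hθ hAθ hsymm hno hnd.1.1 hnd.1.2.1 hnd.2.1.1 h).1.2.2
  have n2 := hrot hnd
  have n3 := hrot n2
  have n4 := hrot n3
  have n5 := hrot n4
  have a1 := hang hnd h1
  have a2 := hang n2 h2
  have a3 := hang n3 h3
  have a4 := hang n4 h4
  have a5 := hang n5 h5
  rw [sum_lt_of_nodup hnd hsymm]
  suffices hS : θ a b + θ b c + θ c d + θ d e + θ e a ≤ Real.pi by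
    linarith [hsymm a e, hsymm d a, hsymm e b]
  by_contra! hS
  have hS' : θ a b + θ b c + θ c d + θ d e + θ e a < 3 * Real.pi := by
    linarith [(hθ a c).1, (hθ b d).1, (hθ c e).1, (hθ d a).1, (hθ e b).1, Real.pi_pos]
  have k1 := pentagon_step hA hdiag hθ hAθ hsymm hno hnd h1 h3 h5 hS hS'
  have k2 := pentagon_step hA hdiag hθ hAθ hsymm hno n2 h2 h4 h1 (by linarith) (by linarith)
  have k3 := pentagon_step hA hdiag hθ hAθ hsymm hno n3 h3 h5 h2 (by linarith) (by linarith)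
  have k4 := pentagon_step hA hdiag hθ hAθ hsymm hno n4 h4 h1 h3 (by linarith) (by linarith)
  have k5 := pentagon_step hA hdiag hθ hAθ hsymm hno n5 h5 h2 h4 (by linarith) (by linarith)
  linarith

end Pentagon

theorem stmt19 (A : Matrix (Fin 5) (Fin 5) ℝ) (hA : Copositive A)
    (hdiag : ∀ i, A i i = 1)
    (hirr : ∀ i j : Fin 5, i ≠ j → IrreducibleWrtMat A (Eij i j))
    (α : Fin 5 → Fin 5 → ℝ)
    (hα : ∀ i j, α i j ∈ Set.Icc (0 : ℝ) 1)
    (hAα : ∀ i j, A i j = -Real.cos (α i j * Real.pi)) :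
    4 ≤ ∑ i : Fin 5, ∑ j ∈ Finset.univ.filter (fun j => i < j), α i j := by
  by_cases hpsd : ∀ y, 0 ≤ bil A y y
  · exact posSemidef_case hA.1 hpsd hdiag hα hAα
  have hpi := Real.pi_pos
  have hθ : ∀ i j, α i j * Real.pi ∈ Set.Icc 0 Real.pi := fun i j =>
    ⟨mul_nonneg (hα i j).1 hpi.le, mul_le_of_le_one_left hpi.le (hα i j).2⟩
  have hsymm : ∀ i j, α i j * Real.pi = α j i * Real.pi := fun i j => by
    refine Real.injOn_cos (hθ i j) (hθ j i) ?_
    have := hA.1.apply i j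
    rw [hAα, hAα] at this
    linarith
  suffices h : 4 * Real.pi ≤
      ∑ i : Fin 5, ∑ j ∈ Finset.univ.filter (fun j => i < j), α i j * Real.pi by
    simp only [← Finset.sum_mul] at h
    exact le_of_mul_le_mul_right h hpi
  by_cases hno : ∀ i j, i ≠ j → -1 < A i j
  · have hcov := fun i j (hij : i ≠ j) => exists_zero_of_irreducible hA hij (hirr i j hij)
    obtain ⟨a, b, c, d, e, hnd, h1, h2, h3, h4, h5⟩ := exists_pentagon (P := IsZeroSupp A)
      (fun i j hij => exists_zeroSupp hA hdiag hno hcov hpsd hij)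
      (fun a b c d e hnd => no_book hA hirr hnd)
    exact pentagon_case hA hdiag hθ hAα hsymm hno hnd h1 h2 h3 h4 h5
  · push Not at hno
    obtain ⟨i, j, hij, h⟩ := hno
    refine neg_one_case hA hdiag hθ hAα hsymm hij (le_antisymm h ?_)
    rw [hAα]
    linarith [Real.cos_le_one (α i j * Real.pi)]
end
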